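/- Let $(M,\omega)$ be a compact connected symplectic manifold with a smooth hamiltonian action of a compact connected Lie group $G$. Let $J_0$ be a $G$-invariant integrable almost complex structure compatible with $\omega$, and let $g_0=\omega(\cdot,J_0\cdot)$ be its Kähler metric. Assume that the reduced scalar curvature $$S^G(J_0)=S-\underline S-\Pi^G S$$ vanishes, where $S$ is the scalar curvature of $g_0$, $\underline S$ its mean value with respect to $\omega^n/n!$, and $\Pi^G$ the $L^2$-orthogonal projection to the space of Killing potentials of mean value zero whose hamiltonian vector field is a fundamental vector field of the action of $G$; in particular $g_0$ is extremal. Let $H$ be the group of hamiltonian diffeomorphisms of $(M,\omega)$, $Z(G,H)$ the centralizer in $H$ of (the image of) $G$, and $\mathcal G=Z(G,H)/(Z(G,H)\cap G)$. Let $\mathfrak z$ be the Lie algebra of $Z(G,H)$, consisting of the hamiltonian vector fields whose flow lies in $Z(G,H)$ (equivalently, of their potentials modulo constants, with the Poisson bracket), and let $\mathfrak g$ be the Lie algebra of the fundamental vector fields of the action. Then $\mathfrak g\cap\mathfrak z$ is an ideal of $\mathfrak z$, and $\mathfrak z/(\mathfrak g\cap\mathfrak z)$ is the Lie algebra of $\mathcal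 G$. Let $K\subseteq\mathcal G$ be the connected component of the identity in the stabilizer of $J_0$, and let $\mathfrak k\subseteq\mathfrak z/(\mathfrak g\cap\mathfrak z)$ be its Lie algebra, i.e. the set of $\xi$ with $\exp(t\xi)\in K$ for all $t\in\mathbb R$. Then there is a Lie algebra homomorphism $\ell:\mathfrak k\to\mathfrak z$ that lifts the inclusion, i.e. the class of $\ell(\xi)$ in $\mathfrak z/(\mathfrak g\cap\mathfrak z)$ is $\xi$ for all $\xi\in\mathfrak k$, and such that every $\ell(\xi)$ is a hamiltonian Killing vector field for $g_0$. -/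

import Mathlib

open Set MeasureTheory Bundle VectorField
open scoped Manifold ContDiff Matrix

noncomputable section

namespace HamAction

/-! ### Smooth vector fields -/

section VectorFields

variable (m : ℕ) (M : Type*) [TopologicalSpace M] [ChartedSpace (EuclideanSpace ℝ (Fin m)) M]

/-- Smooth vector fields on a manifold `M` of dimension `m` without boundary. -/
abbrev VF [IsManifold (𝓡 m) ∞ M] : Type _ :=
  ContMDiffSection (𝓡 m) (EuclideanSpace ℝ (Fin m)) ∞ (TangentSpace (𝓡 m) : M → Type _)

/-- Families of real functions of two tangent vectors at each point of `M`, such as fields of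
bilinear forms. -/
abbrev BilinField : Type _ :=
  ∀ x : M, TangentSpace (𝓡 m) x → TangentSpace (𝓡 m) x → ℝ

/-- Fields of endomorphisms of the tangent spaces. -/
abbrev EndField : Type _ :=
  ∀ x : M, TangentSpace (𝓡 m) x →L[ℝ] TangentSpace (𝓡 m) x

variable {m M} [IsManifold (𝓡 m) ∞ M]

theorem VF.mdiff (X : VF m M) (x : M) : 
    MDifferentiableAt (𝓡 m) (𝓡 m).tangent
      (fun y => (⟨y, X y⟩ : TangentBundle (𝓡 m) M)) x :=
  X.contMDiff.mdifferentiable (by simp) x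

/-- The Lie bracket of vector fields. -/
instance : Bracket (VF m M) (VF m M) where
  bracket X Y :=
    ⟨mlieBracket (𝓡 m) X Y, by
      have : IsManifold (𝓡 m) (((⊤ : ℕ∞) : WithTop ℕ∞) + 1) M := by
        simpa using (inferInstance : IsManifold (𝓡 m) ∞ M)
      have : IsManifold (𝓡 m) (minSmoothness ℝ 2) M := by
        simp only [minSmoothness_of_isRCLikeNormedField]
        infer_instance
      exact ContDiff.mlieBracket_vectorField (m := ⊤) (n := ⊤) X.contMDiff Y.contMDiff (by simp)⟩

theorem VF.bracket_apply (X Y : VF m M) (x : M) : ⁅X, Y⁆ x = mlieBracket (𝓡 m) X Y x := rfl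

instance : LieRing (VF m M) where
  add_lie X Y Z := by
    ext1 x
    simp only [VF.bracket_apply, ContMDiffSection.coe_add, Pi.add_apply]
    exact mlieBracket_add_left (X.mdiff x) (Y.mdiff x)
  lie_add X Y Z := by
    ext1 x
    simp only [VF.bracket_apply, ContMDiffSection.coe_add, Pi.add_apply]
    exact mlieBracket_add_right (Y.mdiff x) (Z.mdiff x)
  lie_self X := by
    ext1 x
    simp [VF.bracket_apply]
  leibniz_lie X Y Z := by
    have : IsManifold (𝓡 m) (minSmoothness ℝ 3) M := by
      simp only [minSmoothness_of_isRCLikeNormedField]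
      infer_instance
    have h : ∀ W : VF m M, ContMDiff (𝓡 m) (𝓡 m).tangent (minSmoothness ℝ 2)
        (fun y => (⟨y, W y⟩ : TangentBundle (𝓡 m) M)) := by
      intro W
      simp only [minSmoothness_of_isRCLikeNormedField]
      exact W.contMDiff.of_le (ENat.LEInfty.out)
    ext1 x
    exact leibniz_identity_mlieBracket_apply (h X x) (h Y x) (h Z x)

instance : LieAlgebra ℝ (VF m M) where
  lie_smul c X Y := by
    ext1 x
    exact mlieBracket_const_smul_right (Y.mdiff x)

end VectorFields

/-! ### Symplectic forms and compatible almost complex structures -/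

section Structures

variable (m : ℕ) (M : Type*) [TopologicalSpace M] [ChartedSpace (EuclideanSpace ℝ (Fin m)) M]
  [IsManifold (𝓡 m) ∞ M]

/-- The derivative `df_x(v)` of a real function. -/
abbrev dd {m : ℕ} {M : Type*} [TopologicalSpace M] [ChartedSpace (EuclideanSpace ℝ (Fin m)) M]
    (f : M → ℝ) (x : M) (v : TangentSpace (𝓡 m) x) : ℝ :=
  mfderiv (𝓡 m) 𝓘(ℝ, ℝ) f x v

/-- Symplectic forms: smooth, alternating, non-degenerate and closed. Closedness is expressed by
the invariant formula for `dΩ(X, Y, Z)`. -/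
structure SymplecticForm where
  form : ∀ x : M, TangentSpace (𝓡 m) x →L[ℝ] TangentSpace (𝓡 m) x →L[ℝ] ℝ
  smooth : ContMDiff (𝓡 m)
    ((𝓡 m).prod 𝓘(ℝ, EuclideanSpace ℝ (Fin m) →L[ℝ] EuclideanSpace ℝ (Fin m) →L[ℝ] ℝ)) ∞
    (fun x => TotalSpace.mk'
      (EuclideanSpace ℝ (Fin m) →L[ℝ] EuclideanSpace ℝ (Fin m) →L[ℝ] ℝ) x (form x))
  alternating : ∀ x v, form x v v = 0
  nondegenerate : ∀ x v, (∀ w, form x v w = 0) → v = 0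
  closed : ∀ (X Y Z : VF m M) (x : M),
    dd (fun y => form y (Y y) (Z y)) x (X x)
      - dd (fun y => form y (X y) (Z y)) x (Y x)
      + dd (fun y => form y (X y) (Y y)) x (Z x)
      - form x (⁅X, Y⁆ x) (Z x) + form x (⁅X, Z⁆ x) (Y x) - form x (⁅Y, Z⁆ x) (X x) = 0

variable {m M}

/-- `f` is a hamiltonian potential of `X`: `Ω(X, ·) = df`. -/
def IsPotential (Ω : SymplecticForm m M) (f : M → ℝ) (X : VF m M) : Prop :=
  ContMDiff (𝓡 m) 𝓘(ℝ, ℝ) ∞ f ∧ ∀ x v, Ω.form x (X x) v = dd f x v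

/-- Hamiltonian vector fields. -/
def IsHamiltonianVF (Ω : SymplecticForm m M) (X : VF m M) : Prop :=
  ∃ f : M → ℝ, IsPotential Ω f X

/-- Almost complex structures compatible with `Ω`: `J² = -1`, `J` preserves `Ω`, and
`Ω(v, Jv) > 0` for `v ≠ 0`. -/
structure CompatibleACS (Ω : SymplecticForm m M) where
  J : EndField m M
  smooth : ContMDiff (𝓡 m)
    ((𝓡 m).prod 𝓘(ℝ, EuclideanSpace ℝ (Fin m) →L[ℝ] EuclideanSpace ℝ (Fin m))) ∞
    (fun x => TotalSpace.mk' (EuclideanSpace ℝ (Fin m) →L[ℝ] EuclideanSpace ℝ (Fin m)) x (J x))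
  sq : ∀ x v, J x (J x v) = -v
  symplectic : ∀ x v w, Ω.form x (J x v) (J x w) = Ω.form x v w
  pos : ∀ x v, v ≠ 0 → 0 < Ω.form x v (J x v)

/-- The riemannian metric `g(v, w) = Ω(v, Jw)` of the pair `(Ω, J)`. -/
def CompatibleACS.metric {Ω : SymplecticForm m M} (j : CompatibleACS Ω) : BilinField m M :=
  fun x v w => Ω.form x v (j.J x w)

/-- The smooth vector field `JX`. -/
def CompatibleACS.apply {Ω : SymplecticForm m M} (j : CompatibleACS Ω) (X : VF m M) : VF m M :=
  ⟨fun x => j.J x (X x), j.smooth.clm_bundle_apply X.contMDiff⟩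

/-- Integrability: the Nijenhuis tensor vanishes. -/
def CompatibleACS.Integrable {Ω : SymplecticForm m M} (j : CompatibleACS Ω) : Prop :=
  ∀ X Y : VF m M,
    ⁅j.apply X, j.apply Y⁆ - j.apply ⁅j.apply X, Y⁆ - j.apply ⁅X, j.apply Y⁆ - ⁅X, Y⁆ = 0

/-- Killing vector fields of the metric `g`: the Lie derivative `L_X g` vanishes. -/
def IsKilling (g : BilinField m M) (X : VF m M) : Prop :=
  ∀ (Y Z : VF m M) (x : M),
    dd (fun y => g y (Y y) (Z y)) x (X x) = g x (⁅X, Y⁆ x) (Z x) + g x (Y x) (⁅X, Z⁆ x)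

end Structures

/-! ### Scalar curvature and Liouville measure, in charts -/

section Curvature

variable {m : ℕ} {M : Type*} [TopologicalSpace M] [ChartedSpace (EuclideanSpace ℝ (Fin m)) M]

/-- The coefficients `B(∂_i, ∂_j)` of a field of bilinear forms in the preferred chart at `x`, as
functions on the target of the chart. -/
def coeff (B : BilinField m M) (x : M) (y : EuclideanSpace ℝ (Fin m)) :
    Matrix (Fin m) (Fin m) ℝ :=
  Matrix.of fun i j =>
    B ((chartAt (EuclideanSpace ℝ (Fin m)) x).symm y)
      (mfderiv (𝓡 m) (𝓡 m) (chartAt (EuclideanSpace ℝ (Fin m)) x).symm y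
        (EuclideanSpace.single i (1 : ℝ)))
      (mfderiv (𝓡 m) (𝓡 m) (chartAt (EuclideanSpace ℝ (Fin m)) x).symm y
        (EuclideanSpace.single j (1 : ℝ)))

/-- The partial derivative `∂_i f`. -/
def pd (i : Fin m) (f : EuclideanSpace ℝ (Fin m) → ℝ) (y : EuclideanSpace ℝ (Fin m)) : ℝ :=
  fderiv ℝ f y (EuclideanSpace.single i (1 : ℝ))

/-- The Christoffel symbol `Γ^k_{ij}` of the metric with coefficients `A`. -/
def christoffel (A : EuclideanSpace ℝ (Fin m) → Matrix (Fin m) (Fin m) ℝ) (k i j : Fin m)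
    (y : EuclideanSpace ℝ (Fin m)) : ℝ :=
  (1 / 2) * ∑ l, (A y)⁻¹ k l *
    (pd i (fun z => A z j l) y + pd j (fun z => A z i l) y - pd l (fun z => A z i j) y)

/-- The Ricci tensor `R_{ij}` of the metric with coefficients `A`. -/
def ricci (A : EuclideanSpace ℝ (Fin m) → Matrix (Fin m) (Fin m) ℝ) (i j : Fin m)
    (y : EuclideanSpace ℝ (Fin m)) : ℝ :=
  ∑ k, (pd k (christoffel A k i j) y - pd j (christoffel A k i k) y)
    + ∑ k, ∑ l, (christoffel A k k l y * christoffel A l i j y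
      - christoffel A k j l y * christoffel A l i k y)

/-- The scalar curvature of the metric `g`. -/
def scalarCurvature (g : BilinField m M) (x : M) : ℝ :=
  ∑ i, ∑ j, (coeff g x (chartAt (EuclideanSpace ℝ (Fin m)) x x))⁻¹ i j *
    ricci (coeff g x) i j (chartAt (EuclideanSpace ℝ (Fin m)) x x)

variable [IsManifold (𝓡 m) ∞ M] [MeasurableSpace M]

/-- The measure `Ω^n / n!` on the domain of the preferred chart at `x`: in coordinates, the
Lebesgue measure with density the pfaffian `√(det Ω_{ij})`. -/
def chartLiouville (Ω : SymplecticForm m M) (x : M) : Measure M :=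
  Measure.map (chartAt (EuclideanSpace ℝ (Fin m)) x).symm
    ((volume.restrict (chartAt (EuclideanSpace ℝ (Fin m)) x).target).withDensity
      fun y => ENNReal.ofReal (Real.sqrt (coeff (fun z v w => Ω.form z v w) x y).det))

/-- The Liouville measure `Ω^n / n!`: the least measure that dominates its restrictions
`chartLiouville Ω x` to all chart domains. -/
def liouville (Ω : SymplecticForm m M) : Measure M := ⨆ x : M, chartLiouville Ω x

end Curvature

/-! ### The group action and the reduced scalar curvature -/

section Action

variable {m k : ℕ} {M : Type*} [TopologicalSpace M] [ChartedSpace (EuclideanSpace ℝ (Fin m)) M]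
  [IsManifold (𝓡 m) ∞ M]
  (G : Type*) [TopologicalSpace G] [ChartedSpace (EuclideanSpace ℝ (Fin k)) G] [Group G]
  [MulAction G M]

variable (m k M) in
/-- The Lie algebra `𝔤` of `G`, viewed as a set of vector fields on `M`: the fundamental vector
fields `x ↦ d/dt (exp(tξ) • x)` at `t = 0`, for `ξ` in the tangent space of `G` at `1`. -/
def fundamentalVF : Set (VF m M) :=
  {X | ∃ ξ : GroupLieAlgebra (𝓡 k) G, ∀ x : M,
    X x = (mfderiv (𝓡 k) (𝓡 m) (fun g : G => g • x) 1 ξ : EuclideanSpace ℝ (Fin m))}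

/-- The action of `G` is hamiltonian: it preserves `Ω` and every fundamental vector field has a
hamiltonian potential. -/
def IsHamiltonianAction (k : ℕ) [ChartedSpace (EuclideanSpace ℝ (Fin k)) G]
    (Ω : SymplecticForm m M) : Prop :=
  (∀ (g : G) (x : M) (v w : TangentSpace (𝓡 m) x),
    Ω.form (g • x) (mfderiv (𝓡 m) (𝓡 m) (fun y : M => g • y) x v)
      (mfderiv (𝓡 m) (𝓡 m) (fun y : M => g • y) x w) = Ω.form x v w) ∧
  ∀ X ∈ fundamentalVF m k M G, IsHamiltonianVF Ω X

/-- The diffeomorphism (or bijection) `φ` satisfies `φ_* J = J`, that is, `dφ ∘ J = J ∘ dφ`. -/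
def Preserves (φ : M → M) (J : EndField m M) : Prop :=
  ∀ (x : M) (v : TangentSpace (𝓡 m) x),
    mfderiv (𝓡 m) (𝓡 m) φ x (J x v) = J (φ x) (mfderiv (𝓡 m) (𝓡 m) φ x v)

theorem Preserves.inverse {J : EndField m M} {f g : M → M} (hf : Preserves f J)
    (df : MDifferentiable (𝓡 m) (𝓡 m) f) (dg : MDifferentiable (𝓡 m) (𝓡 m) g)
    (hgf : ∀ x, g (f x) = x) (hfg : ∀ x, f (g x) = x) : Preserves g J := by
  intro x v
  obtain ⟨y, rfl⟩ : ∃ y, f y = x := ⟨g x, hfg x⟩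
  let A : EuclideanSpace ℝ (Fin m) →L[ℝ] EuclideanSpace ℝ (Fin m) := mfderiv (𝓡 m) (𝓡 m) f y
  let L : EuclideanSpace ℝ (Fin m) →L[ℝ] EuclideanSpace ℝ (Fin m) := mfderiv (𝓡 m) (𝓡 m) g (f y)
  have hLA : ∀ u, L (A u) = u := by
    intro u
    have h := mfderiv_comp y (dg (f y)) (df y)
    rw [show g ∘ f = id from funext hgf, mfderiv_id] at h
    exact (congrArg (fun T : EuclideanSpace ℝ (Fin m) →L[ℝ] EuclideanSpace ℝ (Fin m) => T u) h).symm
  have hAL : ∀ u, A (L u) = u := by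
    intro u
    have hs : Function.Surjective A :=
      (LinearMap.injective_iff_surjective (f := A.toLinearMap)).1 (Function.LeftInverse.injective hLA)
    obtain ⟨w, rfl⟩ := hs u
    rw [hLA]
  have hJ : ∀ u : EuclideanSpace ℝ (Fin m),
      (J (g (f y)) u : EuclideanSpace ℝ (Fin m)) = J y u := by
    rw [hgf y]
    exact fun _ => rfl
  refine Eq.trans ?_ (hJ (L v)).symm
  have h1 : A (J y (L v)) = J (f y) v :=
    (hf y (L v)).trans (congrArg (J (f y)) (hAL v))
  exact (congrArg L h1.symm).trans (hLA _)

/-- `J` is `G`-invariant. -/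
def CompatibleACS.Invariant {Ω : SymplecticForm m M} (j : CompatibleACS Ω) : Prop :=
  ∀ g : G, Preserves (fun x : M => g • x) j.J

variable [MeasurableSpace M]

/-- The space `P^G` of Killing potentials of mean value zero whose hamiltonian vector field
lies in `𝔤`. -/
def killingPotentials (k : ℕ) [ChartedSpace (EuclideanSpace ℝ (Fin k)) G]
    {Ω : SymplecticForm m M} (j : CompatibleACS Ω) : Set (M → ℝ) :=
  {f | ∫ x, f x ∂(liouville Ω) = 0 ∧
    ∃ X ∈ fundamentalVF m k M G, IsPotential Ω f X ∧ IsKilling j.metric X}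

/-- `s` is the reduced scalar curvature `S - (mean of S) - Π^G S` of the Kähler metric `(Ω, J)`
relative to `G`, where `Π^G S = p` is the `L²`-orthogonal projection of the scalar curvature `S`
to `P^G`. -/
def IsReducedScalarCurvature (k : ℕ) [ChartedSpace (EuclideanSpace ℝ (Fin k)) G]
    {Ω : SymplecticForm m M} (j : CompatibleACS Ω) (s : M → ℝ) : Prop :=
  ∃ p ∈ killingPotentials G k j,
    (∀ q ∈ killingPotentials G k j,
      ∫ x, (scalarCurvature j.metric x - p x) * q x ∂(liouville Ω) = 0) ∧
    ∀ x, s x = scalarCurvature j.metric x - ⨍ y, scalarCurvature j.metric y ∂(liouville Ω) - p x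

end Action

/-! ### Groups of diffeomorphisms and their Lie algebras -/

section Groups

variable {m : ℕ} {M : Type*} [TopologicalSpace M] [ChartedSpace (EuclideanSpace ℝ (Fin m)) M]
  [IsManifold (𝓡 m) ∞ M]

variable (m M) in
/-- The group of diffeomorphisms of `M`. -/
def Diff : Subgroup (Equiv.Perm M) where
  carrier := {φ | ContMDiff (𝓡 m) (𝓡 m) ∞ φ ∧ ContMDiff (𝓡 m) (𝓡 m) ∞ (φ⁻¹ : Equiv.Perm M)}
  mul_mem' {φ ψ} hφ hψ := ⟨hφ.1.comp hψ.1, by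
    rw [mul_inv_rev]
    exact hψ.2.comp hφ.2⟩
  one_mem' := ⟨contMDiff_id, contMDiff_id⟩
  inv_mem' {φ} hφ := ⟨hφ.2, by rw [inv_inv]; exact hφ.1⟩

/-- `φ` is a hamiltonian isotopy with time-dependent hamiltonian `F`:
`φ_0 = 1` and `Ω(d/dt φ_t, ·) = dF_t` along `φ_t`. -/
def IsHamiltonianIsotopy (Ω : SymplecticForm m M) (F : ℝ → M → ℝ) (φ : ℝ → Equiv.Perm M) : Prop :=
  ContMDiff (𝓘(ℝ, ℝ).prod (𝓡 m)) 𝓘(ℝ, ℝ) ∞ (fun p : ℝ × M => F p.1 p.2) ∧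
  ContMDiff (𝓘(ℝ, ℝ).prod (𝓡 m)) (𝓡 m) ∞ (fun p : ℝ × M => φ p.1 p.2) ∧
  (∀ t, φ t ∈ Diff m M) ∧ φ 0 = 1 ∧
  ∀ (t : ℝ) (x : M) (v : TangentSpace (𝓡 m) (φ t x)),
    Ω.form (φ t x) (mfderiv 𝓘(ℝ, ℝ) (𝓡 m) (fun s : ℝ => φ s x) t (1 : ℝ)) v = dd (F t) (φ t x) v

/-- The group `H` of hamiltonian diffeomorphisms. Its generators, the time-one maps of hamiltonian
isotopies, already form a group. -/
def Ham (Ω : SymplecticForm m M) : Subgroup (Equiv.Perm M) :=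
  Subgroup.closure {ψ | ∃ F φ, IsHamiltonianIsotopy Ω F φ ∧ φ 1 = ψ}

theorem Ham_le_Diff (Ω : SymplecticForm m M) : Ham Ω ≤ Diff m M := by
  refine (Subgroup.closure_le _).2 ?_
  rintro ψ ⟨F, φ, h, rfl⟩
  exact h.2.2.1 1

variable (G : Type*) [Group G] [MulAction G M]

/-- The centralizer `Z(G, H)` of (the image of) `G` in `H`. -/
def ZGH (Ω : SymplecticForm m M) : Subgroup (Equiv.Perm M) :=
  Ham Ω ⊓ Subgroup.centralizer ((MulAction.toPermHom G M).range : Set (Equiv.Perm M))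

theorem ZGH.mem_Diff {Ω : SymplecticForm m M} (φ : ZGH G Ω) : (φ : Equiv.Perm M) ∈ Diff m M :=
  Ham_le_Diff Ω φ.2.1

/-- The subgroup `Z(G, H) ∩ G` of `Z(G, H)`. -/
def ZcapG (Ω : SymplecticForm m M) : Subgroup (ZGH G Ω) :=
  (MulAction.toPermHom G M).range.subgroupOf (ZGH G Ω)

instance (Ω : SymplecticForm m M) : (ZcapG G Ω).Normal where
  conj_mem n hn z := by
    have h : z * n * z⁻¹ = n := by
      rw [mul_inv_eq_iff_eq_mul]
      exact Subtype.ext ((Subgroup.mem_centralizer_iff.1 z.2.2) _ hn).symm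
    rwa [h]

/-- The group `𝒢 = Z(G, H) / (Z(G, H) ∩ G)`. -/
abbrev GG (Ω : SymplecticForm m M) : Type _ := ZGH G Ω ⧸ ZcapG G Ω

/-- The topology of `𝒢`: the quotient of the compact-open topology on `Z(G, H)`. (It is only used on
the stabilizer of `J`, whose elements lift to isometries of `(Ω, J)`; for isometries the compact-open
and the `C^∞` topology agree.) -/
abbrev topGG (Ω : SymplecticForm m M) : TopologicalSpace (GG G Ω) :=
  TopologicalSpace.coinduced (QuotientGroup.mk : ZGH G Ω → GG G Ω)
    (TopologicalSpace.induced
      (fun φ : ZGH G Ω => (⟨φ.1, (ZGH.mem_Diff G φ).1.continuous⟩ : C(M, M))) inferInstance)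

/-- The elements `φ` of `Z(G, H)` with `φ_* J = J`. -/
def stabZ {Ω : SymplecticForm m M} (j : CompatibleACS Ω) : Subgroup (ZGH G Ω) where
  carrier := {φ | Preserves (φ : Equiv.Perm M) j.J}
  mul_mem' {φ ψ} hφ hψ := by
    have dφ := (ZGH.mem_Diff G φ).1.mdifferentiable (by simp)
    have dψ := (ZGH.mem_Diff G ψ).1.mdifferentiable (by simp)
    intro x v
    have h := mfderiv_comp x (dφ (ψ.1 x)) (dψ x)
    have h' : ⇑((φ * ψ : ZGH G Ω) : Equiv.Perm M) = φ.1 ∘ ψ.1 := rfl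
    rw [h', h]
    exact (congrArg (mfderiv (𝓡 m) (𝓡 m) φ.1 (ψ.1 x)) (hψ x v)).trans (hφ _ _)
  one_mem' := by
    intro x v
    have h' : ⇑((1 : ZGH G Ω) : Equiv.Perm M) = id := rfl
    rw [h', mfderiv_id]
    rfl
  inv_mem' {φ} hφ := by
    have dφ := (ZGH.mem_Diff G φ).1.mdifferentiable (by simp)
    have dψ := (ZGH.mem_Diff G φ).2.mdifferentiable (by simp)
    exact Preserves.inverse hφ dφ dψ (fun x => φ.1.symm_apply_apply x)
      (fun x => φ.1.apply_symm_apply x)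

/-- The stabilizer of `J` in `𝒢`; as `G` preserves `J`, it consists of the classes of the elements
of `Z(G, H)` that preserve `J`. -/
def stabGG {Ω : SymplecticForm m M} (j : CompatibleACS Ω) : Subgroup (GG G Ω) :=
  (stabZ G j).map (QuotientGroup.mk' (ZcapG G Ω))

/-- The connected component `K` of the identity in the stabilizer of `J`. -/
def KK {Ω : SymplecticForm m M} (j : CompatibleACS Ω) : Set (GG G Ω) :=
  @connectedComponentIn (GG G Ω) (topGG G Ω) (stabGG G j : Set (GG G Ω)) 1

/-- `φ_t = exp(tX)` is the flow of `X`. -/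
def IsFlow (X : VF m M) (φ : ℝ → Equiv.Perm M) : Prop :=
  φ 0 = 1 ∧ ContMDiff (𝓘(ℝ, ℝ).prod (𝓡 m)) (𝓡 m) ∞ (fun p : ℝ × M => φ p.1 p.2) ∧
  ∀ x : M, IsMIntegralCurve (fun t => φ t x) X

/-- The Lie algebra `𝔷` of `Z(G, H)`, realised by hamiltonian vector fields (equivalently, by their
potentials modulo constants, with the Poisson bracket): it is generated by
(and in fact equal to) the set of the hamiltonian vector fields `X` with `exp(tX) ∈ Z(G, H)` for
all `t`. -/
def zz (Ω : SymplecticForm m M) : LieSubalgebra ℝ (VF m M) :=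
  LieSubalgebra.lieSpan ℝ (VF m M)
    {X | IsHamiltonianVF Ω X ∧ ∃ φ : ℝ → Equiv.Perm M, IsFlow X φ ∧ ∀ t, φ t ∈ ZGH G Ω}

variable (k : ℕ) [TopologicalSpace G] [ChartedSpace (EuclideanSpace ℝ (Fin k)) G]

/-- The ideal `𝔤 ∩ 𝔷` of `𝔷`. (The set `𝔤 ∩ 𝔷` is a central ideal, hence equal to the ideal that it
generates.) -/
def gcapz (Ω : SymplecticForm m M) : LieIdeal ℝ (zz G Ω) :=
  LieSubmodule.lieSpan ℝ (zz G Ω) {X | (X : VF m M) ∈ fundamentalVF m k M G}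

/-- The Lie algebra `𝔷 / (𝔤 ∩ 𝔷)` of `𝒢`. -/
abbrev LieGG (Ω : SymplecticForm m M) : Type _ := zz G Ω ⧸ gcapz G k Ω

/-- The projection `𝔷 → 𝔷 / (𝔤 ∩ 𝔷)`. -/
abbrev proj (Ω : SymplecticForm m M) : zz G Ω → LieGG G k Ω := LieSubmodule.Quotient.mk

/-- The Lie algebra `𝔨` of `K`: it is generated by (and in fact equal to) the set of the
`ξ ∈ 𝔷 / (𝔤 ∩ 𝔷)` with `exp(tξ) ∈ K` for all `t`; here, if `ξ` is the class of `X`, then `exp(tξ)`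
is the class of `exp(tX)`. -/
def kk {Ω : SymplecticForm m M} (j : CompatibleACS Ω) : LieSubalgebra ℝ (LieGG G k Ω) :=
  LieSubalgebra.lieSpan ℝ (LieGG G k Ω)
    {ξ | ∃ X : zz G Ω, proj G k Ω X = ξ ∧ ∃ φ : ℝ → ZGH G Ω,
      IsFlow (X : VF m M) (fun t => φ t) ∧ ∀ t, (QuotientGroup.mk (φ t) : GG G Ω) ∈ KK G j}

end Groups

end HamAction

end

/-!
Let `P` be the Lie algebra of the stabilizer of `J₀` in `Z(G, H)`. The flows of its generators
preserve `Ω` and `J₀`, so `P` consists of hamiltonian Killing fields. As `G` preserves `J₀`, the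
image of `P` in `𝔷 / (𝔤 ∩ 𝔷)` contains `𝔨`, and it remains to split `P → 𝔷 / (𝔤 ∩ 𝔷)` over `𝔨`.

The kernel is central, because fundamental vector fields commute with `𝔷`. Suppose that `X` is
central in `P` and has the potential `f`. For `Y ∈ P`, the function `Y f` is a potential of
`[Y, X] = 0`, so that `Y (Y f) = 0`. The riemannian measure, realised as the `m`-dimensional
Hausdorff measure of the distance of `g₀`, is invariant under the flows that generate `P`, so all
fields in `P` are divergence-free and `∫ (Y f)² = -∫ f Y (Y f) = 0`: `f` is constant along `P`. If
`X = ∑ [Y_i, Z_i]` with `Y_i, Z_i ∈ P` and `z_i` are potentials of the `Z_i`, then `f = ∑ Y_i z_i`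
is a potential of `X`, and `∫ f² = -∑ ∫ z_i Y_i f = 0`, whence `X = 0`. So the kernel meets `[P, P]`
only in `0`; a linear complement of the kernel that contains `[P, P]` is closed under brackets, and
the inverse of the projection on it is the lift.
-/

open Filter Metric Manifold
open scoped Topology NNReal

noncomputable section

namespace HamAction

section Derivations

variable {m : ℕ} {M : Type*} [TopologicalSpace M] [ChartedSpace (EuclideanSpace ℝ (Fin m)) M]
  {u w : M → ℝ} {x : M}

variable (m) in
/-- Smooth real functions on a manifold of dimension `m`. -/
abbrev Smooth (u : M → ℝ) : Prop := ContMDiff (𝓡 m) 𝓘(ℝ, ℝ) ∞ u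

theorem Smooth.mdifferentiableAt (hu : Smooth m u) : MDifferentiableAt (𝓡 m) 𝓘(ℝ, ℝ) u x :=
  hu.mdifferentiable (by simp) x

theorem dd_add (hu : Smooth m u) (hw : Smooth m w) (v : TangentSpace (𝓡 m) x) :
    dd (fun y => u y + w y) x v = dd u x v + dd w x v :=
  congr($((hu.mdifferentiableAt.hasMFDerivAt.add hw.mdifferentiableAt.hasMFDerivAt).mfderiv) v)

theorem dd_sub (hu : Smooth m u) (hw : Smooth m w) (v : TangentSpace (𝓡 m) x) :
    dd (fun y => u y - w y) x v = dd u x v - dd w x v :=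
  congr($((hu.mdifferentiableAt.hasMFDerivAt.sub hw.mdifferentiableAt.hasMFDerivAt).mfderiv) v)

theorem dd_mul (hu : Smooth m u) (hw : Smooth m w) (v : TangentSpace (𝓡 m) x) :
    dd (fun y => u y * w y) x v = u x * dd w x v + w x * dd u x v :=
  congr($((hu.mdifferentiableAt.hasMFDerivAt.mul hw.mdifferentiableAt.hasMFDerivAt).mfderiv) v)

theorem dd_const (a : ℝ) (v : TangentSpace (𝓡 m) x) : dd (fun _ : M => a) x v = 0 :=
  congr($((hasMFDerivAt_const (I := 𝓡 m) (I' := 𝓘(ℝ, ℝ)) a x).mfderiv) v)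

theorem dd_const_mul (a : ℝ) (hu : Smooth m u) (v : TangentSpace (𝓡 m) x) :
    dd (fun y => a * u y) x v = a * dd u x v := by
  rw [dd_mul contMDiff_const hu, dd_const, mul_zero, add_zero]

theorem dd_congr (h : u =ᶠ[𝓝 x] w) (v : TangentSpace (𝓡 m) x) : dd u x v = dd w x v :=
  congr($(h.mfderiv_eq (I := 𝓡 m) (I' := 𝓘(ℝ, ℝ))) v)

theorem dd_sum {ι : Type*} (s : Finset ι) {u : ι → M → ℝ} (hu : ∀ i, Smooth m (u i))
    (v : TangentSpace (𝓡 m) x) :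
    dd (fun y => ∑ i ∈ s, u i y) x v = ∑ i ∈ s, dd (u i) x v := by
  classical
  induction s using Finset.induction_on with
  | empty => simpa using dd_const 0 v
  | insert i s hi ih =>
    simp only [Finset.sum_insert hi]
    rw [dd_add (hu i) (contMDiff_finsetSum fun j _ => hu j), ih]

theorem dd_comp (hu : Smooth m u) {φ : M → M} (hφ : ContMDiff (𝓡 m) (𝓡 m) ∞ φ)
    (v : TangentSpace (𝓡 m) x) :
    dd (fun y => u (φ y)) x v = dd u (φ x) (mfderiv (𝓡 m) (𝓡 m) φ x v) :=
  congr($(mfderiv_comp x hu.mdifferentiableAt (hφ.mdifferentiable (by simp) x)) v)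

variable [IsManifold (𝓡 m) ∞ M]

/-- The derivative of a function along a vector field. -/
def VF.der (X : VF m M) (u : M → ℝ) : M → ℝ := fun x => dd u x (X x)

theorem VF.smooth_der (X : VF m M) (hu : Smooth m u) : Smooth m (X.der u) :=
  (contMDiff_snd_tangentBundle_modelSpace ℝ 𝓘(ℝ, ℝ)).comp
    ((hu.contMDiff_tangentMap (by simp : (∞ : WithTop ℕ∞) + 1 ≤ ∞)).comp X.contMDiff)

theorem VF.zero_der : VF.der (0 : VF m M) u = 0 :=
  funext fun x => map_zero (mfderiv (𝓡 m) 𝓘(ℝ, ℝ) u x)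

theorem VF.add_der (X Y : VF m M) : VF.der (X + Y) u = X.der u + Y.der u :=
  funext fun x => map_add (mfderiv (𝓡 m) 𝓘(ℝ, ℝ) u x) (X x) (Y x)

theorem VF.smul_der (a : ℝ) (X : VF m M) : VF.der (a • X) u = a • X.der u :=
  funext fun x => map_smul (mfderiv (𝓡 m) 𝓘(ℝ, ℝ) u x) a (X x)

theorem VF.der_mul (X : VF m M) (hu : Smooth m u) (hw : Smooth m w) (x : M) :
    X.der (fun y => u y * w y) x = u x * X.der w x + w x * X.der u x :=
  dd_mul hu hw (X x)

end Derivations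

section Brackets

theorem two_le_infty : minSmoothness ℝ 2 ≤ ∞ := by
  simpa only [minSmoothness_of_isRCLikeNormedField] using ENat.LEInfty.out

variable {m : ℕ} {M : Type*} [TopologicalSpace M] [ChartedSpace (EuclideanSpace ℝ (Fin m)) M]
  [IsManifold (𝓡 m) ∞ M]

theorem contMDiffAt_extChartAt_symm {x : M} {y : EuclideanSpace ℝ (Fin m)}
    (hy : y ∈ (extChartAt (𝓡 m) x).target) :
    ContMDiffAt (𝓡 m) (𝓡 m) ∞ (extChartAt (𝓡 m) x).symm y :=
  (contMDiffOn_extChartAt_symm x).contMDiffAt ((isOpen_extChartAt_target x).mem_nhds hy)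

theorem isInvertible_mfderiv_extChartAt_symm {x : M} {y : EuclideanSpace ℝ (Fin m)}
    (hy : y ∈ (extChartAt (𝓡 m) x).target) :
    (mfderiv (𝓡 m) (𝓡 m) (extChartAt (𝓡 m) x).symm y).IsInvertible := by
  simpa using isInvertible_mfderivWithin_extChartAt_symm (I := 𝓡 m) hy

/-- A vector field read in the preferred chart at `x`; meaningful on the target of the chart. -/
def chartVF (X : VF m M) (x : M) : EuclideanSpace ℝ (Fin m) → EuclideanSpace ℝ (Fin m) :=
  mpullback (𝓡 m) (𝓡 m) (extChartAt (𝓡 m) x).symm X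

theorem differentiableAt_chartVF (X : VF m M) (x : M) :
    DifferentiableAt ℝ (chartVF X x) (extChartAt (𝓡 m) x x) := by
  have h := (X.contMDiff.of_le (m := 1) (by simp) _).contMDiffWithinAt (s := univ)
    |>.mpullback_vectorField_preimage
      (contMDiffAt_extChartAt_symm (mem_extChartAt_target x))
      (isInvertible_mfderiv_extChartAt_symm (mem_extChartAt_target x)) (n := ∞)
      (by rw [one_add_one_eq_two]; exact ENat.LEInfty.out)
  rw [preimage_univ, contMDiffWithinAt_univ] at h
  exact (contMDiffAt_vectorSpace_iff_contDiffAt.1 h).differentiableAt one_ne_zero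

theorem chartVF_bracket (X Y : VF m M) (x : M) :
    chartVF ⁅X, Y⁆ x (extChartAt (𝓡 m) x x) =
      lieBracket ℝ (chartVF X x) (chartVF Y x) (extChartAt (𝓡 m) x x) := by
  have : IsManifold (𝓡 m) (minSmoothness ℝ 2) M := by
    rw [minSmoothness_of_isRCLikeNormedField]
    infer_instance
  refine (mpullback_mlieBracket (X.mdiff _) (Y.mdiff _)
    (contMDiffAt_extChartAt_symm (mem_extChartAt_target x)) two_le_infty).trans ?_
  rw [← lieBracketWithin_univ, ← mlieBracketWithin_univ]
  exact congrFun mlieBracketWithin_eq_lieBracketWithin _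

theorem fderiv_comp_extChartAt_symm {u : M → ℝ} (hu : Smooth m u) (X : VF m M) {x : M}
    {y : EuclideanSpace ℝ (Fin m)} (hy : y ∈ (extChartAt (𝓡 m) x).target) :
    fderiv ℝ (u ∘ (extChartAt (𝓡 m) x).symm) y (chartVF X x y) =
      X.der u ((extChartAt (𝓡 m) x).symm y) := by
  rw [← mfderiv_eq_fderiv, mfderiv_comp y hu.mdifferentiableAt
    ((contMDiffAt_extChartAt_symm hy).mdifferentiableAt (by simp))]
  exact congrArg (mfderiv (𝓡 m) 𝓘(ℝ, ℝ) u _)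
    ((isInvertible_mfderiv_extChartAt_symm hy).self_apply_inverse _)

theorem bracket_der (X Y : VF m M) {u : M → ℝ} (hu : Smooth m u) (x : M) :
    VF.der ⁅X, Y⁆ u x = X.der (Y.der u) x - Y.der (X.der u) x := by
  have hmem := mem_extChartAt_target (I := 𝓡 m) x
  have hder (Z : VF m M) : (fun y => fderiv ℝ (u ∘ (extChartAt (𝓡 m) x).symm) y (chartVF Z x y))
      =ᶠ[𝓝 (extChartAt (𝓡 m) x x)] Z.der u ∘ (extChartAt (𝓡 m) x).symm := by
    filter_upwards [(isOpen_extChartAt_target x).mem_nhds hmem] with y hy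
      using fderiv_comp_extChartAt_symm hu Z hy
  have hu' : ContDiffAt ℝ ∞ (u ∘ (extChartAt (𝓡 m) x).symm) (extChartAt (𝓡 m) x x) :=
    (hu.contMDiffAt.comp _ (contMDiffAt_extChartAt_symm hmem)).contDiffAt
  have key := fderiv_apply_lieBracket hu' two_le_infty (differentiableAt_chartVF Y x)
    (differentiableAt_chartVF X x)
  rw [(hder Y).fderiv_eq, (hder X).fderiv_eq, ← chartVF_bracket,
    fderiv_comp_extChartAt_symm hu _ hmem, fderiv_comp_extChartAt_symm (Y.smooth_der hu) _ hmem,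
    fderiv_comp_extChartAt_symm (X.smooth_der hu) _ hmem] at key
  simpa using key

end Brackets

section Frame

variable {m : ℕ} {M : Type*} [TopologicalSpace M] [ChartedSpace (EuclideanSpace ℝ (Fin m)) M]
  [IsManifold (𝓡 m) ∞ M] [T2Space M]

theorem exists_VF_eventuallyEq_symmL (p : M) (ξ : EuclideanSpace ℝ (Fin m)) :
    ∃ X : VF m M, ∀ᶠ q in 𝓝 p,
      X q = (trivializationAt (EuclideanSpace ℝ (Fin m)) (TangentSpace (𝓡 m)) p).symmL ℝ q ξ := by
  obtain ⟨χ⟩ : Nonempty (SmoothBumpFunction (𝓡 m) p) := inferInstance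
  set t := trivializationAt (EuclideanSpace ℝ (Fin m)) (TangentSpace (𝓡 m)) p
  have hsymm : ContMDiffOn (𝓡 m) (𝓡 m).tangent ∞
      (fun q => (⟨q, t.symmL ℝ q ξ⟩ : TangentBundle (𝓡 m) M)) t.baseSet := by
    rw [t.contMDiffOn_section_baseSet_iff]
    exact (contMDiffOn_const (c := ξ)).congr fun q hq =>
      (t.continuousLinearMapAt_apply_of_mem (R := ℝ) hq _).symm.trans
        (t.continuousLinearMapAt_symmL (R := ℝ) hq ξ)
  refine ⟨⟨fun q => χ q • t.symmL ℝ q ξ, ContMDiffOn.smul_section_of_tsupport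
    χ.contMDiff.contMDiffOn t.open_baseSet χ.tsupport_subset_chartAt_source hsymm⟩, ?_⟩
  filter_upwards [χ.eventuallyEq_one] with q hq
  exact (congrArg (· • t.symmL ℝ q ξ) hq).trans (one_smul ℝ _)

theorem exists_smooth_dd_eventuallyEq (p : M) (L : EuclideanSpace ℝ (Fin m) →L[ℝ] ℝ) :
    ∃ u : M → ℝ, Smooth m u ∧ ∀ᶠ q in 𝓝 p, ∀ v : TangentSpace (𝓡 m) q, dd u q v =
      L ((trivializationAt (EuclideanSpace ℝ (Fin m)) (TangentSpace (𝓡 m)) p).continuousLinearMapAt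
        ℝ q v) := by
  obtain ⟨χ⟩ : Nonempty (SmoothBumpFunction (𝓡 m) p) := inferInstance
  refine ⟨fun q => χ q • L (extChartAt (𝓡 m) p q),
    χ.contMDiff_smul (L.contMDiff.comp_contMDiffOn contMDiffOn_extChartAt), ?_⟩
  filter_upwards [χ.eventuallyEq_one.eventuallyEq_nhds,
    chart_source_mem_nhds (EuclideanSpace ℝ (Fin m)) p] with q hq hqs v
  have hL : (fun q => χ q • L (extChartAt (𝓡 m) p q)) =ᶠ[𝓝 q] L ∘ extChartAt (𝓡 m) p := by
    filter_upwards [hq] with y hy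
    simp [hy]
  have hchain := mfderiv_comp (I := 𝓡 m) q L.mdifferentiableAt
    (mdifferentiableAt_extChartAt (I := 𝓡 m) hqs)
  rw [ContinuousLinearMap.mfderiv_eq] at hchain
  rw [TangentBundle.continuousLinearMapAt_trivializationAt (I := 𝓡 m) hqs,
    dd_congr (m := m) hL]
  exact congr($hchain v)

theorem exists_coordinate_frame (p : M) :
    ∃ (u : Fin m → M → ℝ) (e : Fin m → VF m M), (∀ i, Smooth m (u i)) ∧
      ∀ᶠ q in 𝓝 p, ∀ v : TangentSpace (𝓡 m) q, v = ∑ i, dd (u i) q v • e i q := by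
  set t := trivializationAt (EuclideanSpace ℝ (Fin m)) (TangentSpace (𝓡 m)) p
  choose e he using fun i : Fin m =>
    exists_VF_eventuallyEq_symmL (m := m) p (EuclideanSpace.single i (1 : ℝ))
  choose u hu hdu using fun i : Fin m =>
    exists_smooth_dd_eventuallyEq (m := m) p (EuclideanSpace.proj i)
  refine ⟨u, e, hu, ?_⟩
  filter_upwards [eventually_all.2 he, eventually_all.2 hdu,
    chart_source_mem_nhds (EuclideanSpace ℝ (Fin m)) p] with q he hdu hq v
  have hbasis (w : EuclideanSpace ℝ (Fin m)) : ∑ i, w i • EuclideanSpace.single i (1 : ℝ) = w := by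
    simpa using (EuclideanSpace.basisFun (Fin m) ℝ).sum_repr w
  have hv := t.symmL_continuousLinearMapAt (R := ℝ) hq v
  rw [← hbasis (t.continuousLinearMapAt ℝ q v)] at hv
  simp only [map_sum, map_smul] at hv
  simp only [he, hdu]
  exact hv.symm

theorem exists_VF_apply_eq (x : M) (v : TangentSpace (𝓡 m) x) : ∃ X : VF m M, X x = v := by
  set t := trivializationAt (EuclideanSpace ℝ (Fin m)) (TangentSpace (𝓡 m)) x
  obtain ⟨X, hX⟩ := exists_VF_eventuallyEq_symmL (m := m) x (t.continuousLinearMapAt ℝ x v)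
  exact ⟨X, hX.self_of_nhds.trans (t.symmL_continuousLinearMapAt (R := ℝ) (mem_chart_source _ x) v)⟩

end Frame

section Flows

theorem hasDerivAt_fderiv_apply {E E' : Type*} [NormedAddCommGroup E] [NormedSpace ℝ E]
    [NormedAddCommGroup E'] [NormedSpace ℝ E'] {F : ℝ → E → E'} {g : E → E'} {t : ℝ} {y : E}
    (hF : ContDiffAt ℝ 2 (Function.uncurry F) (t, y))
    (hg : ∀ᶠ z in 𝓝 y, HasDerivAt (F · z) (g z) t) (w : E) :
    HasDerivAt (fun s => fderiv ℝ (F s) y w) (fderiv ℝ g y w) t := by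
  set F' := fderiv ℝ (Function.uncurry F)
  have hdiff : ∀ᶠ p in 𝓝 (t, y), HasFDerivAt (Function.uncurry F) (F' p) p :=
    (hF.eventually (by simp)).mono fun p hp => (hp.differentiableAt two_ne_zero).hasFDerivAt
  have hsnd : (fun s => fderiv ℝ (F s) y w) =ᶠ[𝓝 t] fun s => F' (s, y) (0, w) := by
    filter_upwards [(Continuous.prodMk_left y).tendsto t |>.eventually hdiff] with s hs
    have h := hs.comp y (hasFDerivAt_prodMk_right (𝕜 := ℝ) s y)
    exact congr($(h.fderiv) w)
  have hfst : g =ᶠ[𝓝 y] fun z => F' (t, z) (1, 0) := by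
    filter_upwards [hg, (Continuous.prodMk_right t).tendsto y |>.eventually hdiff] with z hgz hz
    have h := hz.comp_hasDerivAt t ((hasDerivAt_id t).prodMk (hasDerivAt_const t z))
    exact hgz.unique h
  have hF' (v : ℝ × E) : HasFDerivAt (fun p => F' p v)
      ((ContinuousLinearMap.apply ℝ E' v).comp (fderiv ℝ F' (t, y))) (t, y) :=
    (ContinuousLinearMap.apply ℝ E' v).hasFDerivAt.comp (t, y)
      ((hF.fderiv_right (m := 1) (by norm_num)).differentiableAt one_ne_zero).hasFDerivAt
  have hgy := ((hF' (1, 0)).comp y (hasFDerivAt_prodMk_right t y)).congr_of_eventuallyEq hfst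
  have hFt := (hF' (0, w)).comp_hasDerivAt t ((hasDerivAt_id t).prodMk (hasDerivAt_const t y))
  refine (hFt.congr_of_eventuallyEq hsnd).congr_deriv ?_
  rw [hgy.fderiv]
  exact (hF.isSymmSndFDerivAt (by simp)).eq (1, 0) (0, w)

variable {m : ℕ} {M : Type*} [TopologicalSpace M] [ChartedSpace (EuclideanSpace ℝ (Fin m)) M]

theorem dd_eq_fderiv {u : M → ℝ} (hu : Smooth m u) {x : M} (v : TangentSpace (𝓡 m) x) :
    dd u x v = fderiv ℝ (u ∘ (extChartAt (𝓡 m) x).symm) (extChartAt (𝓡 m) x x) v := by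
  rw [dd, hu.mdifferentiableAt.mfderiv]
  simp [writtenInExtChartAt]
  rfl

variable [IsManifold (𝓡 m) ∞ M]

theorem hasDerivAt_dd {f : ℝ → M → ℝ}
    (hf : ContMDiff (𝓘(ℝ, ℝ).prod (𝓡 m)) 𝓘(ℝ, ℝ) ∞ (fun p : ℝ × M => f p.1 p.2))
    {g : M → ℝ} {t : ℝ} (hg : Smooth m g) (h : ∀ y, HasDerivAt (f · y) (g y) t) {x : M}
    (v : TangentSpace (𝓡 m) x) : HasDerivAt (fun s => dd (f s) x v) (dd g x v) t := by
  have hft (s : ℝ) : Smooth m (f s) := hf.comp (contMDiff_const.prodMk contMDiff_id)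
  have hsymm := contMDiffAt_extChartAt_symm (mem_extChartAt_target (I := 𝓡 m) x)
  have hF : ContDiffAt ℝ 2
      (Function.uncurry fun (s : ℝ) y => f s ((extChartAt (𝓡 m) x).symm y))
      (t, extChartAt (𝓡 m) x x) := by
    refine ContDiffAt.of_le (ContMDiffAt.contDiffAt ?_) (n := ∞) ENat.LEInfty.out
    rw [modelWithCornersSelf_prod, ← chartedSpaceSelf_prod]
    exact hf.contMDiffAt.comp _ (contMDiffAt_fst.prodMk
      (ContMDiffAt.comp (t, extChartAt (𝓡 m) x x) hsymm contMDiffAt_snd))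
  simp only [dd_eq_fderiv hg, dd_eq_fderiv (hft _)]
  exact hasDerivAt_fderiv_apply hF (Eventually.of_forall fun y => h _) v

variable {X : VF m M} {φ : ℝ → Equiv.Perm M} {u : M → ℝ}

theorem IsFlow.contMDiff (hφ : IsFlow X φ) (t : ℝ) : ContMDiff (𝓡 m) (𝓡 m) ∞ (φ t) :=
  hφ.2.1.comp (contMDiff_const.prodMk contMDiff_id)

theorem IsFlow.mfderiv_zero (hφ : IsFlow X φ) (x : M) (v : TangentSpace (𝓡 m) x) :
    (mfderiv (𝓡 m) (𝓡 m) (φ 0) x v : EuclideanSpace ℝ (Fin m)) = v := by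
  rw [hφ.1, Equiv.Perm.coe_one, mfderiv_id]
  rfl

theorem IsFlow.hasDerivAt (hφ : IsFlow X φ) (hu : Smooth m u) (x : M) (t : ℝ) :
    HasDerivAt (fun s => u (φ s x)) (X.der u (φ t x)) t := by
  let du : EuclideanSpace ℝ (Fin m) →L[ℝ] ℝ := mfderiv (𝓡 m) 𝓘(ℝ, ℝ) u (φ t x)
  let w : EuclideanSpace ℝ (Fin m) := X (φ t x)
  have h : HasFDerivAt (fun s => u (φ s x)) (du.comp ((1 : ℝ →L[ℝ] ℝ).smulRight w)) t :=
    (hu.mdifferentiableAt.hasMFDerivAt.comp t (hφ.2.2 x t)).hasFDerivAt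
  exact h.hasDerivAt.congr_deriv (congrArg du (one_smul ℝ w))

theorem IsFlow.hasDerivAt_dd (hφ : IsFlow X φ) (hu : Smooth m u) (x : M)
    (v : TangentSpace (𝓡 m) x) (t : ℝ) :
    HasDerivAt (fun s => dd u (φ s x) (mfderiv (𝓡 m) (𝓡 m) (φ s) x v))
      (dd (X.der u) (φ t x) (mfderiv (𝓡 m) (𝓡 m) (φ t) x v)) t := by
  have hXu := X.smooth_der hu
  simp only [← dd_comp hu (hφ.contMDiff _), ← dd_comp hXu (hφ.contMDiff t)]
  exact HamAction.hasDerivAt_dd (hu.comp hφ.2.1) (hXu.comp (hφ.contMDiff t))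
    (fun y => hφ.hasDerivAt hu y t) v

variable [T2Space M]

theorem eq_zero_of_forall_dd_eq_zero {x : M} {v : TangentSpace (𝓡 m) x}
    (h : ∀ u : M → ℝ, Smooth m u → dd u x v = 0) : v = 0 := by
  obtain ⟨u, e, hu, hfr⟩ := exists_coordinate_frame (m := m) x
  rw [hfr.self_of_nhds v]
  simp [h _ (hu _)]

theorem IsFlow.bracket_eq_zero {Y : VF m M} (hφ : IsFlow X φ)
    (h : ∀ t x, mfderiv (𝓡 m) (𝓡 m) (φ t) x (Y x) = Y (φ t x)) : ⁅X, Y⁆ = 0 := by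
  refine ContMDiffSection.ext fun x => eq_zero_of_forall_dd_eq_zero fun u hu => ?_
  have hYu := hφ.hasDerivAt_dd hu x (Y x) 0
  simp only [h] at hYu
  have hcomm := (hφ.hasDerivAt (Y.smooth_der hu) x 0).unique hYu
  rw [hφ.1] at hcomm
  exact (bracket_der X Y hu x).trans (sub_eq_zero.2 hcomm)

end Flows

section LieDerivative

variable {m : ℕ} {M : Type*} [TopologicalSpace M] [ChartedSpace (EuclideanSpace ℝ (Fin m)) M]
  [IsManifold (𝓡 m) ∞ M]

variable (m M) in
/-- Covariant tensor fields of degree two, the common setting for symplectic forms and riemannian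
metrics. Smoothness is tested on smooth vector fields. -/
structure SmoothBilin where
  form : ∀ x : M, TangentSpace (𝓡 m) x →L[ℝ] TangentSpace (𝓡 m) x →L[ℝ] ℝ
  smooth : ∀ Y Z : VF m M, Smooth m (fun x => form x (Y x) (Z x))

/-- The Lie derivative `(L_X B)(Y, Z)`, as a function on `M`. -/
def SmoothBilin.lieDeriv (B : SmoothBilin m M) (X Y Z : VF m M) (x : M) : ℝ :=
  X.der (fun y => B.form y (Y y) (Z y)) x - B.form x (⁅X, Y⁆ x) (Z x) - B.form x (Y x) (⁅X, Z⁆ x)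

theorem bilin_eq_sum {V ι : Type*} [AddCommGroup V] [Module ℝ V] [TopologicalSpace V]
    [IsTopologicalAddGroup V] [ContinuousSMul ℝ V] [Fintype ι] (b : V →L[ℝ] V →L[ℝ] ℝ)
    {e : ι → V} {a c : ι → ℝ} {v w : V} (hv : v = ∑ i, a i • e i) (hw : w = ∑ i, c i • e i) :
    b v w = ∑ i, ∑ j, b (e i) (e j) * a i * c j := by
  simp only [hv, hw, map_sum, map_smul, sum_apply, smul_apply, smul_eq_mul, Finset.mul_sum]
  rw [Finset.sum_comm]
  exact Finset.sum_congr rfl fun i _ => Finset.sum_congr rfl fun j _ => by ring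

theorem SmoothBilin.lieDeriv_eq_sum (B : SmoothBilin m M) (X Y Z : VF m M) {p : M}
    {u : Fin m → M → ℝ} {e : Fin m → VF m M} (hu : ∀ i, Smooth m (u i))
    (h : ∀ᶠ q in 𝓝 p, ∀ v : TangentSpace (𝓡 m) q, v = ∑ i, dd (u i) q v • e i q) :
    B.lieDeriv X Y Z p = ∑ i, ∑ j,
      (X.der (fun y => B.form y (e i y) (e j y)) p * dd (u i) p (Y p) * dd (u j) p (Z p) +
        B.form p (e i p) (e j p) * dd (X.der (u i)) p (Y p) * dd (u j) p (Z p) +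
        B.form p (e i p) (e j p) * dd (u i) p (Y p) * dd (X.der (u j)) p (Z p)) := by
  have hp := h.self_of_nhds
  have hB (i j : Fin m) := B.smooth (e i) (e j)
  have hY (i : Fin m) := Y.smooth_der (hu i)
  have hZ (i : Fin m) := Z.smooth_der (hu i)
  have hBY (i j : Fin m) : Smooth m fun y => B.form y (e i y) (e j y) * Y.der (u i) y :=
    (hB i j).mul (hY i)
  have hBYZ (i j : Fin m) :
      Smooth m fun y => B.form y (e i y) (e j y) * Y.der (u i) y * Z.der (u j) y :=
    (hBY i j).mul (hZ j)
  have hder : X.der (fun y => B.form y (Y y) (Z y)) p = dd (fun y => ∑ i, ∑ j,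
      B.form y (e i y) (e j y) * Y.der (u i) y * Z.der (u j) y) p (X p) :=
    dd_congr (h.mono fun q hq => bilin_eq_sum (B.form q) (hq (Y q)) (hq (Z q))) _
  rw [lieDeriv, hder, dd_sum _ fun i => contMDiff_finsetSum fun j _ => hBYZ i j,
    bilin_eq_sum (B.form p) (hp (⁅X, Y⁆ p)) (hp (Z p)),
    bilin_eq_sum (B.form p) (hp (Y p)) (hp (⁅X, Z⁆ p)), ← Finset.sum_sub_distrib,
    ← Finset.sum_sub_distrib]
  refine Finset.sum_congr rfl fun i _ => ?_
  rw [dd_sum _ (hBYZ i), ← Finset.sum_sub_distrib, ← Finset.sum_sub_distrib]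
  refine Finset.sum_congr rfl fun j _ => ?_
  have hXY : dd (u i) p (⁅X, Y⁆ p) = _ := bracket_der X Y (hu i) p
  have hXZ : dd (u j) p (⁅X, Z⁆ p) = _ := bracket_der X Z (hu j) p
  rw [dd_mul (hBY i j) (hZ j), dd_mul (hB i j) (hY i), hXY, hXZ]
  simp only [VF.der]
  ring

variable [T2Space M]

theorem IsFlow.hasDerivAt_form {X : VF m M} {φ : ℝ → Equiv.Perm M} (hφ : IsFlow X φ)
    (B : SmoothBilin m M) (x : M) (v w : TangentSpace (𝓡 m) x) (t : ℝ) {Y Z : VF m M}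
    (hY : Y (φ t x) = mfderiv (𝓡 m) (𝓡 m) (φ t) x v)
    (hZ : Z (φ t x) = mfderiv (𝓡 m) (𝓡 m) (φ t) x w) :
    HasDerivAt (fun s => B.form (φ s x) (mfderiv (𝓡 m) (𝓡 m) (φ s) x v)
      (mfderiv (𝓡 m) (𝓡 m) (φ s) x w)) (B.lieDeriv X Y Z (φ t x)) t := by
  obtain ⟨u, e, hu, h⟩ := exists_coordinate_frame (m := m) (φ t x)
  have hcont : ContinuousAt (fun s => φ s x) t := (hφ.2.2 x t).continuousAt
  have hexpand : (fun s => B.form (φ s x) (mfderiv (𝓡 m) (𝓡 m) (φ s) x v)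
      (mfderiv (𝓡 m) (𝓡 m) (φ s) x w)) =ᶠ[𝓝 t] fun s => ∑ i, ∑ j,
      B.form (φ s x) (e i (φ s x)) (e j (φ s x)) *
        dd (u i) (φ s x) (mfderiv (𝓡 m) (𝓡 m) (φ s) x v) *
        dd (u j) (φ s x) (mfderiv (𝓡 m) (𝓡 m) (φ s) x w) := by
    filter_upwards [hcont.eventually h] with s hs
    exact bilin_eq_sum (B.form (φ s x)) (hs _) (hs _)
  rw [B.lieDeriv_eq_sum X Y Z hu h]
  refine HasDerivAt.congr_of_eventuallyEq (.fun_sum fun i _ => .fun_sum fun j _ => ?_) hexpand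
  refine (((hφ.hasDerivAt (B.smooth (e i) (e j)) x t).mul (hφ.hasDerivAt_dd (hu i) x v t)).mul
    (hφ.hasDerivAt_dd (hu j) x w t)).congr_deriv ?_
  rw [hY, hZ]
  simp only [Pi.mul_apply]
  ring

end LieDerivative

section Invariance

variable {m : ℕ} {M : Type*} [TopologicalSpace M] [ChartedSpace (EuclideanSpace ℝ (Fin m)) M]
  [IsManifold (𝓡 m) ∞ M] (B : SmoothBilin m M)

theorem SmoothBilin.der_lieDeriv (W X Y Z : VF m M) (x : M) :
    W.der (B.lieDeriv X Y Z) x = W.der (X.der fun y => B.form y (Y y) (Z y)) x -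
      W.der (fun y => B.form y (⁅X, Y⁆ y) (Z y)) x -
      W.der (fun y => B.form y (Y y) (⁅X, Z⁆ y)) x := by
  have hX := X.smooth_der (B.smooth Y Z)
  have hY := B.smooth ⁅X, Y⁆ Z
  exact (dd_sub (hX.sub hY) (B.smooth Y ⁅X, Z⁆) _).trans (congrArg (· - _) (dd_sub hX hY _))

theorem SmoothBilin.lieDeriv_lie (X X' Y Z : VF m M) (x : M) :
    B.lieDeriv ⁅X, X'⁆ Y Z x =
      X.der (B.lieDeriv X' Y Z) x - B.lieDeriv X' ⁅X, Y⁆ Z x - B.lieDeriv X' Y ⁅X, Z⁆ x -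
      (X'.der (B.lieDeriv X Y Z) x - B.lieDeriv X ⁅X', Y⁆ Z x - B.lieDeriv X Y ⁅X', Z⁆ x) := by
  rw [der_lieDeriv, der_lieDeriv]
  simp only [lieDeriv]
  rw [bracket_der X X' (B.smooth Y Z), lie_lie, lie_lie]
  simp only [ContMDiffSection.coe_sub, Pi.sub_apply, map_sub, sub_apply]
  ring

/-- The Lie algebra of the vector fields `X` with `L_X B = 0`. -/
def SmoothBilin.invariantVF : LieSubalgebra ℝ (VF m M) where
  carrier := {X | ∀ Y Z x, B.lieDeriv X Y Z x = 0}
  zero_mem' Y Z x := by simp [lieDeriv, VF.zero_der]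
  add_mem' {X X'} hX hX' Y Z x := by
    have h : B.lieDeriv (X + X') Y Z x = B.lieDeriv X Y Z x + B.lieDeriv X' Y Z x := by
      simp only [lieDeriv, VF.add_der, add_lie, ContMDiffSection.coe_add, Pi.add_apply, map_add,
        add_apply]
      ring
    rw [h, hX, hX', add_zero]
  smul_mem' a X hX Y Z x := by
    have h : B.lieDeriv (a • X) Y Z x = a * B.lieDeriv X Y Z x := by
      simp only [lieDeriv, VF.smul_der, smul_lie, ContMDiffSection.coe_smul, Pi.smul_apply,
        map_smul, smul_apply, smul_eq_mul]
      ring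
    rw [h, hX, mul_zero]
  lie_mem' {X X'} hX hX' Y Z x := by
    have h (W : VF m M) {X : VF m M} (hX : ∀ Y Z x, B.lieDeriv X Y Z x = 0) :
        W.der (B.lieDeriv X Y Z) x = 0 := by
      rw [funext (hX Y Z)]
      exact dd_const 0 _
    rw [lieDeriv_lie, h X hX', h X' hX, hX, hX, hX', hX']
    simp

variable {B}

theorem SmoothBilin.isKilling_of_mem_invariantVF {X : VF m M} (hX : X ∈ B.invariantVF) :
    IsKilling (fun x v w => B.form x v w) X := fun Y Z x =>
  sub_eq_zero.1 ((sub_sub _ _ _).symm.trans (hX Y Z x))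

variable {X : VF m M} {φ : ℝ → Equiv.Perm M}

theorem IsFlow.form_mfderiv_zero (hφ : IsFlow X φ) (x : M) (v w : TangentSpace (𝓡 m) x) :
    B.form (φ 0 x) (mfderiv (𝓡 m) (𝓡 m) (φ 0) x v) (mfderiv (𝓡 m) (𝓡 m) (φ 0) x w) =
      B.form x v w := by
  have hv := hφ.mfderiv_zero x v
  have hw := hφ.mfderiv_zero x w
  rw [hφ.1] at hv hw ⊢
  exact congrArg₂ (B.form x · ·) hv hw

variable [T2Space M]

theorem IsFlow.form_mfderiv_eq (hφ : IsFlow X φ) (hX : X ∈ B.invariantVF) (t : ℝ) (x : M)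
    (v w : TangentSpace (𝓡 m) x) :
    B.form (φ t x) (mfderiv (𝓡 m) (𝓡 m) (φ t) x v) (mfderiv (𝓡 m) (𝓡 m) (φ t) x w) =
      B.form x v w := by
  have hd (s : ℝ) : HasDerivAt (fun s => B.form (φ s x) (mfderiv (𝓡 m) (𝓡 m) (φ s) x v)
      (mfderiv (𝓡 m) (𝓡 m) (φ s) x w)) 0 s := by
    obtain ⟨Y, hY⟩ := exists_VF_apply_eq (φ s x) (mfderiv (𝓡 m) (𝓡 m) (φ s) x v)
    obtain ⟨Z, hZ⟩ := exists_VF_apply_eq (φ s x) (mfderiv (𝓡 m) (𝓡 m) (φ s) x w)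
    exact (hφ.hasDerivAt_form B x v w s hY hZ).congr_deriv (hX Y Z _)
  exact (is_const_of_deriv_eq_zero (fun s => (hd s).differentiableAt) (fun s => (hd s).deriv)
    t 0).trans (hφ.form_mfderiv_zero x v w)

theorem IsFlow.mem_invariantVF (hφ : IsFlow X φ)
    (h : ∀ (t : ℝ) (x : M) (v w : TangentSpace (𝓡 m) x), B.form (φ t x)
      (mfderiv (𝓡 m) (𝓡 m) (φ t) x v) (mfderiv (𝓡 m) (𝓡 m) (φ t) x w) = B.form x v w) :
    X ∈ B.invariantVF := by
  intro Y Z x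
  have h₀ (V : VF m M) : V (φ 0 x) = mfderiv (𝓡 m) (𝓡 m) (φ 0) x (V x) := by
    rw [hφ.mfderiv_zero, hφ.1]
    rfl
  have hd := hφ.hasDerivAt_form B x (Y x) (Z x) 0 (h₀ Y) (h₀ Z)
  simp only [h] at hd
  have hL := hd.unique (hasDerivAt_const (0 : ℝ) _)
  rwa [hφ.1] at hL

end Invariance

section Symplectic

variable {m : ℕ} {M : Type*} [TopologicalSpace M] [ChartedSpace (EuclideanSpace ℝ (Fin m)) M]
  [IsManifold (𝓡 m) ∞ M]

theorem SymplecticForm.antisymm (Ω : SymplecticForm m M) (x : M) (v w : TangentSpace (𝓡 m) x) :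
    Ω.form x v w = -Ω.form x w v := by
  have h := Ω.alternating x (v + w)
  simp only [map_add, add_apply, Ω.alternating] at h
  linarith

theorem SymplecticForm.smooth_apply (Ω : SymplecticForm m M) (Y Z : VF m M) :
    Smooth m (fun y => Ω.form y (Y y) (Z y)) := by
  intro x
  have h := ContMDiffAt.clm_bundle_apply₂ (F₁ := EuclideanSpace ℝ (Fin m))
    (F₂ := EuclideanSpace ℝ (Fin m)) (F₃ := ℝ) (E₃ := Bundle.Trivial M ℝ)
    Ω.smooth.contMDiffAt (Y.contMDiff x) (Z.contMDiff x)
  simpa using! (contMDiffAt_section _).1 h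

/-- A symplectic form as a covariant tensor field, to take its Lie derivatives. -/
def SymplecticForm.toBilin (Ω : SymplecticForm m M) : SmoothBilin m M where
  form := Ω.form
  smooth := Ω.smooth_apply

/-- The metric `g(v, w) = Ω(v, Jw)` as a covariant tensor field, to take its Lie derivatives. -/
def CompatibleACS.toBilin {Ω : SymplecticForm m M} (j : CompatibleACS Ω) : SmoothBilin m M where
  form x := (ContinuousLinearMap.precomp ℝ (j.J x)).comp (Ω.form x)
  smooth Y Z := Ω.smooth_apply Y (j.apply Z)

variable {Ω : SymplecticForm m M} {X Y : VF m M} {f h : M → ℝ}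

theorem IsHamiltonianVF.mem_invariantVF (hX : IsHamiltonianVF Ω X) :
    X ∈ Ω.toBilin.invariantVF := by
  obtain ⟨f, hf, hfX⟩ := hX
  intro Y Z x
  have hXZ : (fun y => Ω.form y (X y) (Z y)) = Z.der f := funext fun y => hfX y _
  have hXY : (fun y => Ω.form y (X y) (Y y)) = Y.der f := funext fun y => hfX y _
  have hYZ : Ω.form x (X x) (⁅Y, Z⁆ x) = Y.der (Z.der f) x - Z.der (Y.der f) x :=
    (hfX x _).trans (bracket_der Y Z hf x)
  have hclosed := Ω.closed X Y Z x
  rw [hXZ, hXY, Ω.antisymm x (⁅Y, Z⁆ x) (X x), hYZ, Ω.antisymm x (⁅X, Z⁆ x) (Y x)] at hclosed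
  simp only [SmoothBilin.lieDeriv, SymplecticForm.toBilin, VF.der] at hclosed ⊢
  linarith

theorem IsPotential.zero (Ω : SymplecticForm m M) : IsPotential Ω (fun _ => 0) (0 : VF m M) :=
  ⟨contMDiff_const, fun x v => by simp [dd_const]⟩

theorem IsPotential.add (hX : IsPotential Ω f X) (hY : IsPotential Ω h Y) :
    IsPotential Ω (fun x => f x + h x) (X + Y) := by
  refine ⟨hX.1.add hY.1, fun x v => ?_⟩
  rw [dd_add hX.1 hY.1, ← hX.2, ← hY.2]
  simp

theorem IsPotential.smul (a : ℝ) (hX : IsPotential Ω f X) :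
    IsPotential Ω (fun x => a * f x) (a • X) := by
  refine ⟨contMDiff_const.mul hX.1, fun x v => ?_⟩
  rw [dd_const_mul a hX.1, ← hX.2]
  simp

variable [T2Space M]

theorem IsPotential.bracket (hX : IsHamiltonianVF Ω X) (hY : IsPotential Ω h Y) :
    IsPotential Ω (X.der h) ⁅X, Y⁆ := by
  refine ⟨X.smooth_der hY.1, fun x v => ?_⟩
  obtain ⟨Z, rfl⟩ := exists_VF_apply_eq x v
  have hYZ : (fun y => Ω.form y (Y y) (Z y)) = Z.der h := funext fun y => hY.2 y _
  have hXZ : Ω.form x (Y x) (⁅X, Z⁆ x) = X.der (Z.der h) x - Z.der (X.der h) x :=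
    (hY.2 x _).trans (bracket_der X Z hY.1 x)
  have hinv := hX.mem_invariantVF Y Z x
  simp only [SmoothBilin.lieDeriv, SymplecticForm.toBilin] at hinv
  rw [hYZ, hXZ] at hinv
  simp only [VF.der] at hinv ⊢
  linarith

variable (Ω) in
/-- The Lie algebra of hamiltonian vector fields. -/
def hamiltonianVF : LieSubalgebra ℝ (VF m M) where
  carrier := {X | IsHamiltonianVF Ω X}
  zero_mem' := ⟨_, .zero Ω⟩
  add_mem' := fun ⟨_, hf⟩ ⟨_, hh⟩ => ⟨_, hf.add hh⟩
  smul_mem' := fun a _ ⟨_, hf⟩ => ⟨_, hf.smul a⟩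
  lie_mem' := fun hX ⟨_, hf⟩ => ⟨_, hf.bracket hX⟩

end Symplectic

section PathLength

variable {E H M E' H' N : Type*}
  [NormedAddCommGroup E] [NormedSpace ℝ E] [TopologicalSpace H] {I : ModelWithCorners ℝ E H}
  [TopologicalSpace M] [ChartedSpace H M] [∀ x : M, ENorm (TangentSpace I x)]
  [NormedAddCommGroup E'] [NormedSpace ℝ E'] [TopologicalSpace H'] {I' : ModelWithCorners ℝ E' H'}
  [TopologicalSpace N] [ChartedSpace H' N] [∀ y : N, ENorm (TangentSpace I' y)]

theorem pathELength_comp_le {f : M → N} {C : ℝ≥0} {γ : ℝ → M} {a b : ℝ} (hab : a < b)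
    (hγ : MDifferentiableOn 𝓘(ℝ, ℝ) I γ (Icc a b))
    (hf : ∀ t ∈ Icc a b, MDifferentiableAt I I' f (γ t))
    (hC : ∀ t ∈ Icc a b, ∀ v : TangentSpace I (γ t), ‖mfderiv I I' f (γ t) v‖ₑ ≤ C * ‖v‖ₑ) :
    pathELength I' (f ∘ γ) a b ≤ C * pathELength I γ a b := by
  simp only [pathELength_eq_lintegral_mfderivWithin_Icc]
  rw [← lintegral_const_mul' _ _ ENNReal.coe_ne_top]
  refine setLIntegral_mono' measurableSet_Icc fun t ht => ?_
  rw [mfderiv_comp_mfderivWithin t (hf t ht) (hγ t ht)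
    (uniqueMDiffOn_iff_uniqueDiffOn.2 (uniqueDiffOn_Icc hab) t ht)]
  exact hC t ht _

end PathLength

section LipschitzMaps

variable {E H M E' H' N : Type*}
  [NormedAddCommGroup E] [NormedSpace ℝ E] [TopologicalSpace H] {I : ModelWithCorners ℝ E H}
  [PseudoEMetricSpace M] [ChartedSpace H M] [RiemannianBundle (fun x : M => TangentSpace I x)]
  [NormedAddCommGroup E'] [NormedSpace ℝ E'] [TopologicalSpace H'] {I' : ModelWithCorners ℝ E' H'}
  [PseudoEMetricSpace N] [ChartedSpace H' N] [RiemannianBundle (fun x : N => TangentSpace I' x)]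

theorem lipschitzWith_of_enorm_mfderiv_le [IsRiemannianManifold I M] [IsRiemannianManifold I' N]
    {f : M → N} {C : ℝ≥0} (hf : ContMDiff I I' 1 f) (hC₀ : C ≠ 0)
    (hC : ∀ x (v : TangentSpace I x), ‖mfderiv I I' f x v‖ₑ ≤ C * ‖v‖ₑ) : LipschitzWith C f := by
  intro x y
  have hC' : (C : ENNReal) ≠ 0 := ENNReal.coe_ne_zero.2 hC₀
  rw [IsRiemannianManifold.out (I := I) x y, IsRiemannianManifold.out (I := I') (f x) (f y),
    mul_comm, ← ENNReal.div_le_iff hC' ENNReal.coe_ne_top]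
  refine le_of_forall_gt_imp_ge_of_dense fun r hr => ?_
  obtain ⟨γ, rfl, rfl, hγ, hlt⟩ := exists_lt_of_riemannianEDist_lt hr
  rw [ENNReal.div_le_iff hC' ENNReal.coe_ne_top, mul_comm]
  calc riemannianEDist I' (f (γ 0)) (f (γ 1)) ≤ pathELength I' (f ∘ γ) 0 1 :=
        riemannianEDist_le_pathELength (hf.comp_contMDiffOn hγ) rfl rfl zero_le_one
    _ ≤ C * pathELength I γ 0 1 := pathELength_comp_le zero_lt_one
        (hγ.mdifferentiableOn one_ne_zero) (fun t _ => hf.mdifferentiable one_ne_zero _)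
        fun t _ => hC _
    _ ≤ C * r := by gcongr

theorem lipschitzOnWith_of_enorm_mfderiv_le [IsRiemannianManifold I' N] {F : Type*}
    [NormedAddCommGroup F] [InnerProductSpace ℝ F] {f : F → N} {C : ℝ≥0} {s : Set F}
    (hs : Convex ℝ s) (hf : ∀ x ∈ s, ContMDiffAt 𝓘(ℝ, F) I' 1 f x)
    (hC : ∀ x ∈ s, ∀ v : TangentSpace 𝓘(ℝ, F) x, ‖mfderiv 𝓘(ℝ, F) I' f x v‖ₑ ≤ C * ‖v‖ₑ) :
    LipschitzOnWith C f s := by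
  intro x hx y hy
  set γ : ℝ → F := ⇑(ContinuousAffineMap.lineMap (R := ℝ) x y) with hγ
  have hmem : ∀ t ∈ Icc (0 : ℝ) 1, γ t ∈ s := fun t ht => by
    simpa [hγ, ContinuousAffineMap.coe_lineMap_eq] using hs.lineMap_mem hx hy ht
  have hsmooth : ContMDiff 𝓘(ℝ, ℝ) 𝓘(ℝ, F) 1 γ := (ContinuousAffineMap.contDiff _).contMDiff
  calc edist (f x) (f y) = riemannianEDist I' (f x) (f y) := IsRiemannianManifold.out ..
    _ ≤ pathELength I' (f ∘ γ) 0 1 := riemannianEDist_le_pathELength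
        (fun t ht => (hf _ (hmem t ht)).comp_contMDiffWithinAt t (hsmooth t).contMDiffWithinAt)
        (by simp [hγ, ContinuousAffineMap.coe_lineMap_eq])
        (by simp [hγ, ContinuousAffineMap.coe_lineMap_eq]) zero_le_one
    _ ≤ C * pathELength 𝓘(ℝ, F) γ 0 1 := pathELength_comp_le zero_lt_one
        (hsmooth.mdifferentiable one_ne_zero).mdifferentiableOn
        (fun t ht => (hf _ (hmem t ht)).mdifferentiableAt one_ne_zero) fun t ht => hC _ (hmem t ht)
    _ = C * edist x y := by
      rw [pathELength_eq_lintegral_mfderivWithin_Icc, ← lintegral_fderiv_lineMap_eq_edist]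
      simp only [mfderivWithin_eq_fderivWithin, enorm_tangentSpace_vectorSpace]
      rfl

theorem isometry_of_enorm_mfderiv_eq [IsRiemannianManifold I M] [IsRiemannianManifold I' N]
    (f : M ≃ N) (hf : ContMDiff I I' 1 f) (hf' : ContMDiff I' I 1 f.symm)
    (h : ∀ x (v : TangentSpace I x), ‖mfderiv I I' f x v‖ₑ = ‖v‖ₑ) : Isometry f := by
  have hinv (y : N) (w : TangentSpace I' y) : ‖mfderiv I' I f.symm y w‖ₑ ≤ (1 : ℝ≥0) * ‖w‖ₑ := by
    have hcomp := mfderiv_comp y (hf.mdifferentiable one_ne_zero (f.symm y))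
      (hf'.mdifferentiable one_ne_zero y)
    rw [f.self_comp_symm, mfderiv_id] at hcomp
    have hnorm : ∀ z, z = y → ‖(show TangentSpace I' z from w)‖ₑ = ‖w‖ₑ := by rintro z rfl; rfl
    rw [ENNReal.coe_one, one_mul, ← h, ← hnorm _ (f.apply_symm_apply y)]
    exact congr(‖(show TangentSpace I' (f (f.symm y)) from ($hcomp w))‖ₑ).ge
  have hle : LipschitzWith 1 f := lipschitzWith_of_enorm_mfderiv_le hf one_ne_zero (by simp [h])
  have hge : LipschitzWith 1 f.symm := lipschitzWith_of_enorm_mfderiv_le hf' one_ne_zero hinv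
  refine fun x y => le_antisymm (by simpa using hle x y) ?_
  simpa using hge (f x) (f y)

variable [IsManifold I 1 M] [IsContinuousRiemannianBundle E (fun x : M => TangentSpace I x)]
  [IsManifold I' 1 N] [IsContinuousRiemannianBundle E' (fun x : N => TangentSpace I' x)]

theorem exists_enorm_mfderiv_le_of_contMDiffAt {f : M → N} {x : M} (hf : ContMDiffAt I I' 1 f x) :
    ∃ C : ℝ≥0, ∀ᶠ y in 𝓝 x, ∀ v : TangentSpace I y, ‖mfderiv I I' f y v‖ₑ ≤ C * ‖v‖ₑ := by
  have hcont := (hf.mfderiv_const (m := 0) (by simp)).continuousAt.norm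
  obtain ⟨A, -, hA⟩ := eventually_norm_trivializationAt_lt E (fun x : M => TangentSpace I x) x
  obtain ⟨B, hB0, hB⟩ :=
    eventually_norm_symmL_trivializationAt_lt E' (fun x : N => TangentSpace I' x) (f x)
  set D := ‖inTangentCoordinates I I' id f (mfderiv I I' f) x x‖ + 1
  have hD := hcont.eventually_lt (continuousAt_const (y := D)) (lt_add_one _)
  refine ⟨(B * (D * A)).toNNReal, ?_⟩
  filter_upwards [hA, hf.continuousAt.eventually hB, hD, chart_source_mem_nhds H x,
    hf.continuousAt (chart_source_mem_nhds H' (f x))] with y hyA hyB hyD hyM hyN v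
  have hv : mfderiv I I' f y v = (trivializationAt E' (fun x : N => TangentSpace I' x) (f x)).symmL
      ℝ (f y) (inTangentCoordinates I I' id f (mfderiv I I' f) x y
        ((trivializationAt E (fun x : M => TangentSpace I x) x).continuousLinearMapAt ℝ y v)) := by
    change _ = Trivialization.symmL ℝ _ _ (Trivialization.continuousLinearMapAt ℝ _ _
      (mfderiv I I' f y (Trivialization.symmL ℝ _ _
        (Trivialization.continuousLinearMapAt ℝ _ _ v))))
    rw [Trivialization.symmL_continuousLinearMapAt _ hyN]
    exact congrArg (mfderiv I I' f y)
      (Trivialization.symmL_continuousLinearMapAt (R := ℝ) _ hyM v).symm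
  have key : ‖mfderiv I I' f y v‖ ≤ B * (D * A) * ‖v‖ := by
    rw [hv]
    refine (ContinuousLinearMap.le_of_opNorm_le _ hyB.le _).trans ?_
    rw [mul_assoc, mul_assoc]
    gcongr
    refine (ContinuousLinearMap.le_of_opNorm_le _ hyD.le _).trans ?_
    gcongr
    exact ContinuousLinearMap.le_of_opNorm_le _ hyA.le _
  rw [← ofReal_norm, ← ofReal_norm, ENNReal.ofNNReal_toNNReal,
    ← ENNReal.ofReal_mul' (norm_nonneg _)]
  exact ENNReal.ofReal_le_ofReal key

theorem exists_lipschitzWith_of_contMDiff [CompactSpace M] [IsRiemannianManifold I M]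
    [IsRiemannianManifold I' N] {f : M → N} (hf : ContMDiff I I' 1 f) :
    ∃ C : ℝ≥0, LipschitzWith C f := by
  choose C hC using fun x => exists_enorm_mfderiv_le_of_contMDiffAt hf.contMDiffAt (x := x)
  obtain ⟨s, -, hs⟩ := isCompact_univ.elim_nhds_subcover _ fun x _ => hC x
  refine ⟨s.sup C + 1, lipschitzWith_of_enorm_mfderiv_le hf (by positivity) fun y v => ?_⟩
  obtain ⟨x, hx, hy⟩ := mem_iUnion₂.1 (hs (mem_univ y))
  refine (hy v).trans ?_
  gcongr
  exact (Finset.le_sup hx).trans le_self_add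

end LipschitzMaps

instance {E : Type*} [NormedAddCommGroup E] [InnerProductSpace ℝ E] :
    IsContinuousRiemannianBundle E (fun x : E => TangentSpace 𝓘(ℝ, E) x) :=
  ⟨(riemannianMetricVectorSpace E).inner, (riemannianMetricVectorSpace E).contMDiff.continuous,
    fun _ _ _ => rfl⟩

section Hausdorff

variable {E : Type*} [NormedAddCommGroup E] [InnerProductSpace ℝ E] [FiniteDimensional ℝ E]
  {H : Type*} [TopologicalSpace H] {I : ModelWithCorners ℝ E H} [I.Boundaryless]
  {M : Type*} [EMetricSpace M] [ChartedSpace H M] [IsManifold I ∞ M]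
  [RiemannianBundle (fun x : M => TangentSpace I x)]
  [IsContinuousRiemannianBundle E (fun x : M => TangentSpace I x)] [IsRiemannianManifold I M]
  [MeasurableSpace M] [BorelSpace M]

include I

theorem exists_mem_nhds_hausdorffMeasure_lt_top (x : M) :
    ∃ U ∈ 𝓝 x, μH[Module.finrank ℝ E] U < ⊤ := by
  borelize E
  have hsymm : ContMDiffAt 𝓘(ℝ, E) I 1 (extChartAt I x).symm (extChartAt I x x) :=
    (contMDiffOn_extChartAt_symm x).contMDiffAt (extChartAt_target_mem_nhds x)
  obtain ⟨C, hC⟩ := exists_enorm_mfderiv_le_of_contMDiffAt hsymm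
  obtain ⟨r, hr, hball⟩ := Metric.eventually_nhds_iff_ball.1
    (hC.and ((contMDiffAt_iff_contMDiffAt_nhds (by simp)).1 hsymm))
  have hlip : LipschitzOnWith C (extChartAt I x).symm (ball (extChartAt I x x) r) :=
    lipschitzOnWith_of_enorm_mfderiv_le (convex_ball _ _) (fun y hy => (hball y hy).2)
      fun y hy => (hball y hy).1
  refine ⟨(extChartAt I x).symm '' ball (extChartAt I x x) r, ?_, ?_⟩
  · have himage := image_mem_map (m := (extChartAt I x).symm) (ball_mem_nhds (extChartAt I x x) hr)
    rwa [← nhdsWithin_univ, ← I.range_eq_univ, map_extChartAt_symm_nhdsWithin_range] at himage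
  · refine (hlip.hausdorffMeasure_image_le (Nat.cast_nonneg _)).trans_lt ?_
    exact ENNReal.mul_lt_top (by simp) measure_ball_lt_top

theorem isFiniteMeasure_hausdorffMeasure [CompactSpace M] :
    IsFiniteMeasure (μH[Module.finrank ℝ E] : Measure M) :=
  have : IsLocallyFiniteMeasure (μH[Module.finrank ℝ E] : Measure M) :=
    ⟨exists_mem_nhds_hausdorffMeasure_lt_top (I := I)⟩
  inferInstance

theorem isOpenPosMeasure_hausdorffMeasure [CompactSpace M] :
    (μH[Module.finrank ℝ E] : Measure M).IsOpenPosMeasure := by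
  borelize E
  refine ⟨fun U hU ⟨x, hx⟩ hU₀ => ?_⟩
  obtain ⟨χ⟩ : Nonempty (SmoothBumpFunction I x) := inferInstance
  obtain ⟨C, hC⟩ := exists_lipschitzWith_of_contMDiff (I' := 𝓘(ℝ, E))
    ((χ.contMDiff_smul contMDiffOn_extChartAt).of_le (mod_cast le_top))
  have hχ : (fun y => χ y • extChartAt I x y) =ᶠ[𝓝 x] extChartAt I x := by
    filter_upwards [χ.eventuallyEq_one] with y hy using by simp [hy]
  have hnhds : (fun y => χ y • extChartAt I x y) '' U ∈ 𝓝 (extChartAt I x x) := by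
    rw [← map_extChartAt_nhds_of_boundaryless, ← Filter.map_congr hχ]
    exact image_mem_map (hU.mem_nhds hx)
  refine (Measure.measure_pos_of_mem_nhds μH[Module.finrank ℝ E] hnhds).ne' (le_zero_iff.1 ?_)
  simpa [hU₀] using hC.hausdorffMeasure_image_le (Nat.cast_nonneg (Module.finrank ℝ E)) U

end Hausdorff

section Coercive

variable {E : Type*} [NormedAddCommGroup E] [NormedSpace ℝ E] {B : E →L[ℝ] E →L[ℝ] ℝ}

theorem isCoercive_of_pos [FiniteDimensional ℝ E] (hB : ∀ v, v ≠ 0 → 0 < B v v) :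
    IsCoercive B := by
  have hc : Continuous fun v => B v v := by fun_prop
  rcases subsingleton_or_nontrivial E with hE | hE
  · exact ⟨1, one_pos, fun v => by simp [Subsingleton.elim v 0]⟩
  obtain ⟨v₀, hv₀, hmin⟩ := (isCompact_sphere (0 : E) 1).exists_isMinOn
    (NormedSpace.sphere_nonempty.2 zero_le_one) hc.continuousOn
  refine ⟨B v₀ v₀, hB v₀ (ne_of_mem_sphere hv₀ one_ne_zero), fun v => ?_⟩
  obtain rfl | hv := eq_or_ne v 0
  · simp
  have hv' : ‖v‖⁻¹ • v ∈ sphere (0 : E) 1 := by simp [norm_smul, hv]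
  have hle : B v₀ v₀ ≤ B (‖v‖⁻¹ • v) (‖v‖⁻¹ • v) := hmin hv'
  calc B v₀ v₀ * ‖v‖ * ‖v‖ ≤ B (‖v‖⁻¹ • v) (‖v‖⁻¹ • v) * ‖v‖ * ‖v‖ := by gcongr
    _ = B v v := by
      simp only [map_smul, smul_apply, smul_eq_mul]
      field

theorem isVonNBounded_of_isCoercive (hB : IsCoercive B) :
    Bornology.IsVonNBounded ℝ {v | B v v < 1} := by
  obtain ⟨C, hC, h⟩ := hB
  refine (NormedSpace.isVonNBounded_iff ℝ).2 <| isBounded_iff_forall_norm_le.2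
    ⟨C⁻¹ + 1, fun v hv => ?_⟩
  have hle : C * (‖v‖ * ‖v‖) < 1 := by simpa only [mul_assoc] using (h v).trans_lt hv
  have hC' : ‖v‖ * ‖v‖ < C⁻¹ := by rwa [← one_div, lt_div_iff₀' hC]
  nlinarith [sq_nonneg (‖v‖ - 1), norm_nonneg v]

end Coercive

section RiemannianMeasure

variable {E H M : Type*} [NormedAddCommGroup E] [InnerProductSpace ℝ E] [FiniteDimensional ℝ E]
  [TopologicalSpace H] {I : ModelWithCorners ℝ E H} [I.Boundaryless] [TopologicalSpace M]
  [ChartedSpace H M] [IsManifold I ∞ M] [T3Space M] [CompactSpace M] [MeasurableSpace M]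
  [BorelSpace M]

theorem exists_isometry_invariant_measure
    (g : ContinuousRiemannianMetric E (fun x : M => TangentSpace I x)) :
    ∃ μ : Measure M, IsFiniteMeasure μ ∧ μ.IsOpenPosMeasure ∧
      ∀ φ : M ≃ M, ContMDiff I I 1 φ → ContMDiff I I 1 φ.symm →
        (∀ (x : M) (v : TangentSpace I x),
          g.inner (φ x) (mfderiv I I φ x v) (mfderiv I I φ x v) = g.inner x v v) →
        MeasurePreserving φ μ μ := by
  have : IsManifold I 1 M := .of_le (n := ∞) (by simp)
  let : RiemannianBundle (fun x : M => TangentSpace I x) := ⟨g.toRiemannianMetric⟩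
  let : EMetricSpace M := .ofRiemannianMetric I M
  refine ⟨.hausdorffMeasure (Module.finrank ℝ E), isFiniteMeasure_hausdorffMeasure (I := I),
    isOpenPosMeasure_hausdorffMeasure (I := I), fun φ hφ hφ' h => ?_⟩
  have hiso : Isometry φ := isometry_of_enorm_mfderiv_eq (I := I) (I' := I) φ hφ hφ' fun x v => by
    have hsq : ‖mfderiv I I φ x v‖ ^ 2 = ‖v‖ ^ 2 := by
      rw [← real_inner_self_eq_norm_sq, ← real_inner_self_eq_norm_sq]
      exact h x v
    rw [← ofReal_norm, ← ofReal_norm, (sq_eq_sq₀ (norm_nonneg _) (norm_nonneg _)).1 hsq]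
  exact (IsometryEquiv.mk φ hiso).measurePreserving_hausdorffMeasure _

end RiemannianMeasure

section Metric

variable {m : ℕ} {M : Type*} [TopologicalSpace M] [ChartedSpace (EuclideanSpace ℝ (Fin m)) M]
  [IsManifold (𝓡 m) ∞ M] [T2Space M]

theorem SmoothBilin.continuous_form (B : SmoothBilin m M) :
    Continuous fun x => TotalSpace.mk'
      (EuclideanSpace ℝ (Fin m) →L[ℝ] EuclideanSpace ℝ (Fin m) →L[ℝ] ℝ) x (B.form x) := by
  refine continuous_iff_continuousAt.2 fun p => (continuousAt_hom_bundle _ _).2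
    ⟨continuousAt_id, continuousAt_clm_apply.2 fun ξ => continuousAt_clm_apply.2 fun η => ?_⟩
  obtain ⟨Y, hY⟩ := exists_VF_eventuallyEq_symmL p ξ
  obtain ⟨Z, hZ⟩ := exists_VF_eventuallyEq_symmL p η
  refine (B.smooth Y Z).continuous.continuousAt.congr ?_
  filter_upwards [hY, hZ, (trivializationAt (EuclideanSpace ℝ (Fin m)) (TangentSpace (𝓡 m))
    p).open_baseSet.mem_nhds (mem_baseSet_trivializationAt _ _ p)] with q hYq hZq hq
  rw [inCoordinates_apply_eq₂ hq hq (mem_univ _), hYq, hZq]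
  simp only [Trivial.fiberBundle_trivializationAt', Trivial.linearMapAt_trivialization,
    LinearMap.id_coe, id_eq]
  exact congrArg₂ (B.form q · ·) (Trivialization.symmL_apply _ hq ξ)
    (Trivialization.symmL_apply _ hq η)

/-- A symmetric and positive definite tensor field, as a riemannian metric in the sense of
Mathlib. -/
def SmoothBilin.toRiemannianMetric (B : SmoothBilin m M)
    (symm : ∀ x v w, B.form x v w = B.form x w v) (pos : ∀ x v, v ≠ 0 → 0 < B.form x v v) :
    ContinuousRiemannianMetric (EuclideanSpace ℝ (Fin m))
      (fun x : M => TangentSpace (𝓡 m) x) where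
  inner := B.form
  symm := symm
  pos := pos
  isVonNBounded x := isVonNBounded_of_isCoercive <|
    isCoercive_of_pos (E := EuclideanSpace ℝ (Fin m)) (pos x)
  continuous := B.continuous_form

variable {Ω : SymplecticForm m M}

/-- The metric `g(v, w) = Ω(v, Jw)`, as a riemannian metric in the sense of Mathlib. -/
def CompatibleACS.toRiemannianMetric (j : CompatibleACS Ω) :
    ContinuousRiemannianMetric (EuclideanSpace ℝ (Fin m)) (fun x : M => TangentSpace (𝓡 m) x) :=
  j.toBilin.toRiemannianMetric (pos := j.pos) (symm := fun x v w => by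
    change Ω.form x v (j.J x w) = Ω.form x w (j.J x v)
    rw [← j.symplectic, j.sq, map_neg, Ω.antisymm x w])

end Metric

section Divergence

variable {m : ℕ} {M : Type*} [TopologicalSpace M] [ChartedSpace (EuclideanSpace ℝ (Fin m)) M]
  [CompactSpace M] [MeasurableSpace M] [BorelSpace M] {μ : Measure M} [IsFiniteMeasure μ]
  {u w : M → ℝ}

theorem Smooth.integrable (hu : Smooth m u) : Integrable u μ :=
  hu.continuous.integrable_of_hasCompactSupport (.of_compactSpace u)

theorem Smooth.eq_zero_of_integral_mul_self [μ.IsOpenPosMeasure] (hu : Smooth m u)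
    (h : ∫ x, u x * u x ∂μ = 0) : u = 0 := by
  have hsq : Smooth m fun x => u x * u x := hu.mul hu
  have hae : (fun x => u x * u x) =ᵐ[μ] 0 :=
    (integral_eq_zero_iff_of_nonneg (fun x => mul_self_nonneg (u x)) hsq.integrable).1 h
  have h0 : (fun x => u x * u x) = 0 := (hsq.continuous.ae_eq_iff_eq μ continuous_zero).1 hae
  exact funext fun x => mul_self_eq_zero.1 (congrFun h0 x)

variable [IsManifold (𝓡 m) ∞ M]

variable (μ) in
/-- The Lie algebra of the vector fields `X` that are divergence-free with respect to `μ`, in the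
weak sense that `∫ X u dμ = 0` for all smooth functions `u`. -/
def divergenceFreeVF : LieSubalgebra ℝ (VF m M) where
  carrier := {X | ∀ u : M → ℝ, Smooth m u → ∫ x, X.der u x ∂μ = 0}
  zero_mem' u _ := by simp [VF.zero_der]
  add_mem' {X Y} hX hY u hu := by
    rw [VF.add_der, integral_add' (X.smooth_der hu).integrable (Y.smooth_der hu).integrable,
      hX u hu, hY u hu, add_zero]
  smul_mem' a X hX u hu := by
    simp only [VF.smul_der, Pi.smul_apply, integral_smul, hX u hu, smul_zero]
  lie_mem' {X Y} hX hY u hu := by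
    simp only [bracket_der X Y hu]
    rw [integral_sub (X.smooth_der (Y.smooth_der hu)).integrable
      (Y.smooth_der (X.smooth_der hu)).integrable, hX _ (Y.smooth_der hu),
      hY _ (X.smooth_der hu), sub_zero]

variable {X : VF m M}

theorem integral_mul_der_eq_neg (hX : X ∈ divergenceFreeVF μ) (hu : Smooth m u)
    (hw : Smooth m w) : ∫ x, u x * X.der w x ∂μ = -∫ x, w x * X.der u x ∂μ := by
  have huw : Smooth m fun x => u x * X.der w x := hu.mul (X.smooth_der hw)
  have hwu : Smooth m fun x => w x * X.der u x := hw.mul (X.smooth_der hu)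
  rw [eq_neg_iff_add_eq_zero, ← integral_add huw.integrable hwu.integrable]
  simp only [← X.der_mul hu hw]
  exact hX _ (hu.mul hw)

variable {φ : ℝ → Equiv.Perm M}

theorem IsFlow.hasDerivAt_integral (hφ : IsFlow X φ) (hu : Smooth m u) :
    HasDerivAt (fun t => ∫ x, u (φ t x) ∂μ) (∫ x, X.der u x ∂μ) 0 := by
  have hXu := X.smooth_der hu
  obtain ⟨C, hC⟩ := isCompact_univ.exists_bound_of_continuousOn hXu.continuous.continuousOn
  have hφu (t : ℝ) {u : M → ℝ} (hu : Smooth m u) : Integrable (fun x => u (φ t x)) μ :=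
    Smooth.integrable (hu.comp (hφ.contMDiff t))
  have hd := (hasDerivAt_integral_of_dominated_loc_of_deriv_le (μ := μ) (x₀ := (0 : ℝ))
    (F := fun t x => u (φ t x)) (F' := fun t x => X.der u (φ t x)) univ_mem
    (.of_forall fun t => (hφu t hu).aestronglyMeasurable) (hφu 0 hu)
    (hφu 0 hXu).aestronglyMeasurable (.of_forall fun x t _ => hC _ (mem_univ _))
    (integrable_const C) (.of_forall fun x t _ => hφ.hasDerivAt hu x t)).2
  rwa [hφ.1] at hd

theorem IsFlow.mem_divergenceFreeVF (hφ : IsFlow X φ)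
    (hμ : ∀ t, MeasurePreserving (φ t) μ μ) : X ∈ divergenceFreeVF μ := by
  intro u hu
  have hconst (t : ℝ) : ∫ x, u (φ t x) ∂μ = ∫ x, u x ∂μ := by
    have h := integral_map (μ := μ) (hμ t).measurable.aemeasurable (f := u)
      hu.continuous.aestronglyMeasurable
    rwa [(hμ t).map_eq, eq_comm] at h
  have hd := hφ.hasDerivAt_integral (μ := μ) hu
  simp only [hconst] at hd
  exact hd.unique (hasDerivAt_const (0 : ℝ) _)

end Divergence

section Center

variable {m : ℕ} {M : Type*} [TopologicalSpace M] [ChartedSpace (EuclideanSpace ℝ (Fin m)) M]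
  [IsManifold (𝓡 m) ∞ M]

theorem IsPotential.eq_zero {Ω : SymplecticForm m M} {X : VF m M} (h : IsPotential Ω 0 X) :
    X = 0 :=
  ContMDiffSection.ext fun x => Ω.nondegenerate x _ fun w => (h.2 x w).trans (dd_const 0 w)

variable [T2Space M] [CompactSpace M] [MeasurableSpace M] [BorelSpace M] {μ : Measure M}
  [IsFiniteMeasure μ] {Ω : SymplecticForm m M} {P : LieSubalgebra ℝ (VF m M)}

theorem der_potential_eq_zero_of_mem_center [μ.IsOpenPosMeasure] (hΩ : P ≤ hamiltonianVF Ω)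
    (hμ : P ≤ divergenceFreeVF μ) {X : P} (hX : X ∈ LieAlgebra.center ℝ P) {f : M → ℝ}
    (hf : IsPotential Ω f (X : VF m M)) {Y : VF m M} (hY : Y ∈ P) : Y.der f = 0 := by
  have hYX : ⁅Y, (X : VF m M)⁆ = 0 := congrArg Subtype.val (hX ⟨Y, hY⟩)
  have hpot : IsPotential Ω (Y.der f) 0 := hYX ▸ hf.bracket (hΩ hY)
  have hYY : Y.der (Y.der f) = 0 := funext fun x => (hpot.2 x (Y x)).symm.trans (by simp)
  refine Smooth.eq_zero_of_integral_mul_self (μ := μ) hpot.1 ?_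
  rw [integral_mul_der_eq_neg (hμ hY) hpot.1 hf.1, hYY]
  simp

theorem exists_potential_orthogonal_of_mem_lie_top (hΩ : P ≤ hamiltonianVF Ω)
    (hμ : P ≤ divergenceFreeVF μ) {X : P} (hX : X ∈ ⁅(⊤ : LieIdeal ℝ P), (⊤ : LieIdeal ℝ P)⁆) :
    ∃ h, IsPotential Ω h (X : VF m M) ∧ ∀ f : M → ℝ, Smooth m f →
      (∀ Y ∈ P, VF.der Y f = 0) → ∫ x, f x * h x ∂μ = 0 := by
  rw [← LieSubmodule.mem_toSubmodule, LieSubmodule.lieIdeal_oper_eq_linear_span'] at hX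
  induction hX using Submodule.span_induction with
  | mem X hX =>
    obtain ⟨Y, -, Z, -, rfl⟩ := hX
    obtain ⟨z, hz⟩ := hΩ Z.2
    refine ⟨_, hz.bracket (hΩ Y.2), fun f hf hfP => ?_⟩
    rw [integral_mul_der_eq_neg (hμ Y.2) hf hz.1, hfP _ Y.2]
    simp
  | zero => exact ⟨_, .zero Ω, fun f _ _ => by simp⟩
  | add X Y _ _ hX hY =>
    obtain ⟨h, hh, hhf⟩ := hX
    obtain ⟨h', hh', hhf'⟩ := hY
    refine ⟨_, hh.add hh', fun f hf hfP => ?_⟩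
    have hi {w : M → ℝ} (hw : Smooth m w) : Integrable (fun x => f x * w x) μ :=
      Smooth.integrable (m := m) (hf.mul hw)
    simp only [mul_add]
    rw [integral_add (hi hh.1) (hi hh'.1), hhf f hf hfP, hhf' f hf hfP, add_zero]
  | smul a X _ hX =>
    obtain ⟨h, hh, hhf⟩ := hX
    refine ⟨_, hh.smul a, fun f hf hfP => ?_⟩
    simp only [mul_left_comm _ a]
    rw [integral_const_mul, hhf f hf hfP, mul_zero]

theorem disjoint_center_lie_top [μ.IsOpenPosMeasure] (hΩ : P ≤ hamiltonianVF Ω)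
    (hμ : P ≤ divergenceFreeVF μ) :
    Disjoint (LieAlgebra.center ℝ P) ⁅(⊤ : LieIdeal ℝ P), (⊤ : LieIdeal ℝ P)⁆ := by
  refine LieSubmodule.disjoint_toSubmodule.1 (Submodule.disjoint_def.2 fun X hX hXP => ?_)
  obtain ⟨h, hh, hhP⟩ := exists_potential_orthogonal_of_mem_lie_top hΩ hμ hXP
  have hconst (Y : VF m M) (hY : Y ∈ P) : VF.der Y h = 0 :=
    der_potential_eq_zero_of_mem_center hΩ hμ hX hh hY
  obtain rfl : h = 0 := Smooth.eq_zero_of_integral_mul_self hh.1 (hhP h hh.1 hconst)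
  exact Subtype.ext hh.eq_zero

end Center

section Lift

theorem exists_lieHom_lift_of_disjoint_ker {F L Q : Type*} [Field F] [LieRing L] [LieAlgebra F L]
    [LieRing Q] [LieAlgebra F Q] (f : L →ₗ⁅F⁆ Q)
    (hf : Disjoint f.ker ⁅(⊤ : LieIdeal F L), (⊤ : LieIdeal F L)⁆) {K : LieSubalgebra F Q}
    (hK : K ≤ f.range) : ∃ s : K →ₗ⁅F⁆ L, ∀ y, f (s y) = y := by
  let D : Submodule F L := ⁅(⊤ : LieIdeal F L), (⊤ : LieIdeal F L)⁆.toSubmodule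
  obtain ⟨C, hC⟩ := exists_isCompl (f.ker.toSubmodule ⊔ D)
  let W : Submodule F L := D ⊔ C
  have hdisj : Disjoint f.ker.toSubmodule W :=
    (LieSubmodule.disjoint_toSubmodule.2 hf).disjoint_sup_right_of_disjoint_sup_left hC.disjoint
  have htop : f.ker.toSubmodule ⊔ W = ⊤ := (sup_assoc ..).symm.trans hC.sup_eq_top
  have hinj {x y : L} (hx : x ∈ W) (hy : y ∈ W) (hxy : f x = f y) : x = y :=
    sub_eq_zero.1 <| Submodule.disjoint_def.1 hdisj _
      (f.mem_ker.2 (by rw [map_sub, hxy, sub_self])) (W.sub_mem hx hy)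
  have hsurj (y : K) : ∃ x ∈ W, f x = y := by
    obtain ⟨x, hx⟩ := hK y.2
    obtain ⟨n, hn, w, hw, rfl⟩ := Submodule.mem_sup.1 (htop ▸ Submodule.mem_top (x := x))
    exact ⟨w, hw, by rw [← hx]; simp [f.mem_ker.1 hn]⟩
  choose s hsW hs using hsurj
  refine ⟨{ toFun := s, map_add' := fun x y => ?_, map_smul' := fun a x => ?_,
            map_lie' := fun {x y} => ?_ }, hs⟩
  · exact hinj (hsW _) (W.add_mem (hsW x) (hsW y)) (by simp [hs])
  · exact hinj (hsW _) (W.smul_mem a (hsW x)) (by simp [hs])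
  · have hlie : ⁅s x, s y⁆ ∈ W :=
      Submodule.mem_sup_left (LieSubmodule.lie_mem_lie trivial trivial)
    exact hinj (hsW _) hlie (by simp [hs])

end Lift

section Centralizer

variable {m k : ℕ} {M : Type*} [TopologicalSpace M] [ChartedSpace (EuclideanSpace ℝ (Fin m)) M]
  [IsManifold (𝓡 m) ∞ M] {G : Type*} [Group G] [MulAction G M] {Ω : SymplecticForm m M}

section Fundamental

variable [TopologicalSpace G] [ChartedSpace (EuclideanSpace ℝ (Fin k)) G]
  [ContMDiffSMul (𝓡 k) (𝓡 m) ∞ G M]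

theorem mfderiv_fundamentalVF {X : VF m M} (hX : X ∈ fundamentalVF m k M G) {φ : M → M}
    (hφ : ContMDiff (𝓡 m) (𝓡 m) ∞ φ) (hc : ∀ (g : G) x, φ (g • x) = g • φ x) (x : M) :
    mfderiv (𝓡 m) (𝓡 m) φ x (X x) = X (φ x) := by
  obtain ⟨ξ, hξ⟩ := hX
  have horbit : ContMDiff (𝓡 k) (𝓡 m) ∞ fun g : G => g • x := contMDiff_id.smul contMDiff_const
  have hequiv : φ ∘ (fun g : G => g • x) = fun g : G => g • φ x := funext fun g => hc g x
  have hcomp := mfderiv_comp_apply (1 : G) (hφ.mdifferentiable (by simp) _)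
    (horbit.mdifferentiable (by simp) _) ξ
  have hone : mfderiv (𝓡 m) (𝓡 m) φ ((1 : G) • x) = mfderiv (𝓡 m) (𝓡 m) φ x := by rw [one_smul]
  rw [hequiv, hone] at hcomp
  exact (congrArg _ (hξ x)).trans (hcomp.symm.trans (hξ (φ x)).symm)

variable [T2Space M]

theorem bracket_fundamentalVF {X Y : VF m M} (hX : X ∈ fundamentalVF m k M G)
    (hY : Y ∈ zz G Ω) : ⁅Y, X⁆ = 0 := by
  induction hY using LieSubalgebra.lieSpan_induction with
  | mem Y hY =>
    obtain ⟨-, φ, hφ, hZ⟩ := hY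
    refine hφ.bracket_eq_zero fun t x => ?_
    refine mfderiv_fundamentalVF hX (hφ.contMDiff t) (fun g x => ?_) x
    have hcomm := Subgroup.mem_centralizer_iff.1 (hZ t).2 (MulAction.toPermHom G M g) ⟨g, rfl⟩
    exact congr($hcomm.symm x)
  | zero => exact zero_lie X
  | add Y Z _ _ hY hZ => rw [add_lie, hY, hZ, add_zero]
  | smul a Y _ hY => rw [smul_lie, hY, smul_zero]
  | lie Y Z _ _ hY hZ => rw [lie_lie, hY, hZ, lie_zero, lie_zero, sub_zero]

theorem gcapz_le_center : gcapz G k Ω ≤ LieAlgebra.center ℝ (zz G Ω) :=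
  LieSubmodule.lieSpan_le.2 fun _ hX Y => Subtype.ext (bracket_fundamentalVF (k := k) hX Y.2)

end Fundamental

variable [T2Space M]

theorem zz_le_hamiltonianVF : zz G Ω ≤ hamiltonianVF Ω :=
  LieSubalgebra.lieSpan_le.2 fun _ hX => hX.1

end Centralizer

section Stabilizer

variable {m k : ℕ} {M : Type*} [TopologicalSpace M] [ChartedSpace (EuclideanSpace ℝ (Fin m)) M]
  [IsManifold (𝓡 m) ∞ M] {G : Type*} [Group G] [MulAction G M] {Ω : SymplecticForm m M}
  {j : CompatibleACS Ω}

theorem mem_stabZ_of_mk_mem_KK (hinv : j.Invariant G) {φ : ZGH G Ω}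
    (h : (QuotientGroup.mk φ : GG G Ω) ∈ KK G j) : φ ∈ stabZ G j := by
  obtain ⟨ψ, hψ, hφψ⟩ := @connectedComponentIn_subset _ (topGG G Ω) _ _ _ h
  have hle : ZcapG G Ω ≤ stabZ G j := by
    rintro χ ⟨g, hg⟩
    have hχ : (χ : Equiv.Perm M) = MulAction.toPermHom G M g := hg.symm
    change Preserves (χ : Equiv.Perm M) j.J
    exact hχ ▸ hinv g
  simpa using mul_mem hψ (hle (QuotientGroup.eq.1 hφψ))

variable (G j) in
/-- The Lie algebra of the stabilizer of `J` in `Z(G, H)`, generated by the hamiltonian vector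
fields `X` such that `exp(tX)` lies in this stabilizer for all `t`. -/
def stabzz : LieSubalgebra ℝ (VF m M) :=
  LieSubalgebra.lieSpan ℝ (VF m M)
    {X | IsHamiltonianVF Ω X ∧
      ∃ φ : ℝ → ZGH G Ω, IsFlow X (fun t => φ t) ∧ ∀ t, φ t ∈ stabZ G j}

theorem stabzz_le_zz : stabzz G j ≤ zz G Ω :=
  LieSubalgebra.lieSpan_mono fun _ ⟨hX, φ, hφ, _⟩ => ⟨hX, fun t => φ t, hφ, fun t => (φ t).2⟩

variable [T2Space M]

theorem metric_mfderiv_eq {X : VF m M} (hX : IsHamiltonianVF Ω X) {φ : ℝ → Equiv.Perm M}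
    (hφ : IsFlow X φ) (hJ : ∀ t, Preserves (φ t) j.J) (t : ℝ) (x : M)
    (v w : TangentSpace (𝓡 m) x) :
    j.metric (φ t x) (mfderiv (𝓡 m) (𝓡 m) (φ t) x v) (mfderiv (𝓡 m) (𝓡 m) (φ t) x w) =
      j.metric x v w := by
  have hω := hφ.form_mfderiv_eq hX.mem_invariantVF t x v (j.J x w)
  rw [hJ t x w] at hω
  exact hω

theorem stabzz_le_invariantVF : stabzz G j ≤ j.toBilin.invariantVF :=
  LieSubalgebra.lieSpan_le.2 fun _ ⟨hX, _, hφ, hJ⟩ =>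
    hφ.mem_invariantVF (metric_mfderiv_eq hX hφ hJ)

variable (G j) in
theorem exists_stabzz_le_divergenceFreeVF [CompactSpace M] [MeasurableSpace M] [BorelSpace M] :
    ∃ (μ : Measure M) (_ : IsFiniteMeasure μ), μ.IsOpenPosMeasure ∧
      stabzz G j ≤ divergenceFreeVF μ := by
  obtain ⟨μ, hfin, hpos, hμ⟩ := exists_isometry_invariant_measure j.toRiemannianMetric
  refine ⟨μ, hfin, hpos, LieSubalgebra.lieSpan_le.2 fun X ⟨hX, φ, hφ, hJ⟩ =>
    hφ.mem_divergenceFreeVF fun t => ?_⟩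
  obtain ⟨hsmooth, hsymm⟩ := ZGH.mem_Diff G (φ t)
  exact hμ (φ t) (hsmooth.of_le (by simp)) (hsymm.of_le (by simp)) fun x v =>
    metric_mfderiv_eq hX hφ hJ t x v v

end Stabilizer

section Projection

variable {m k : ℕ} {M : Type*} [TopologicalSpace M] [ChartedSpace (EuclideanSpace ℝ (Fin m)) M]
  [IsManifold (𝓡 m) ∞ M] {G : Type*} [TopologicalSpace G]
  [ChartedSpace (EuclideanSpace ℝ (Fin k)) G] [Group G] [MulAction G M] {Ω : SymplecticForm m M}
  {j : CompatibleACS Ω}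

variable (k G j) in
/-- The projection `𝔷 → 𝔷 / (𝔤 ∩ 𝔷)`, restricted to the Lie algebra of the stabilizer of `J` in
`Z(G, H)`. -/
def stabProj : stabzz G j →ₗ⁅ℝ⁆ LieGG G k Ω where
  toLinearMap := (gcapz G k Ω).toSubmodule.mkQ ∘ₗ Submodule.inclusion stabzz_le_zz
  map_lie' := rfl

variable [T2Space M]

theorem kk_le_range_stabProj (hinv : j.Invariant G) : kk G k j ≤ (stabProj k G j).range := by
  refine LieSubalgebra.lieSpan_le.2 ?_
  rintro _ ⟨X, rfl, φ, hφ, hK⟩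
  have hX : (X : VF m M) ∈ stabzz G j := LieSubalgebra.subset_lieSpan
    ⟨zz_le_hamiltonianVF X.2, φ, hφ, fun t => mem_stabZ_of_mk_mem_KK hinv (hK t)⟩
  exact ⟨⟨X, hX⟩, rfl⟩

theorem ker_stabProj_le_center [ContMDiffSMul (𝓡 k) (𝓡 m) ∞ G M] :
    (stabProj k G j).ker ≤ LieAlgebra.center ℝ (stabzz G j) := by
  intro X hX Y
  have hXc : LieSubalgebra.inclusion stabzz_le_zz X ∈ LieAlgebra.center ℝ (zz G Ω) :=
    gcapz_le_center (k := k) ((Submodule.Quotient.mk_eq_zero _).1 (LieHom.mem_ker.1 hX))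
  have hYX := hXc (LieSubalgebra.inclusion stabzz_le_zz Y)
  exact Subtype.ext congr(($hYX : VF m M))

end Projection

theorem lift_of_stabilizer_lie_algebra_general {m k : ℕ}
    {M : Type*} [TopologicalSpace M] [ChartedSpace (EuclideanSpace ℝ (Fin m)) M]
    [IsManifold (𝓡 m) ∞ M] [T2Space M] [CompactSpace M]
    {G : Type*} [TopologicalSpace G] [ChartedSpace (EuclideanSpace ℝ (Fin k)) G] [Group G]
    [MulAction G M] [ContMDiffSMul (𝓡 k) (𝓡 m) ∞ G M]
    (Ω : SymplecticForm m M) (j₀ : CompatibleACS Ω) (hinv : j₀.Invariant G) :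
    ∃ lift : kk G k j₀ →ₗ⁅ℝ⁆ zz G Ω,
      (∀ ξ : kk G k j₀, proj G k Ω (lift ξ) = ξ) ∧
      ∀ ξ : kk G k j₀, IsHamiltonianVF Ω (lift ξ : VF m M) ∧
        IsKilling j₀.metric (lift ξ : VF m M) := by
  borelize M
  obtain ⟨μ, _, _, hμ⟩ := exists_stabzz_le_divergenceFreeVF G j₀
  have hcenter := disjoint_center_lie_top (stabzz_le_zz.trans zz_le_hamiltonianVF) hμ
  obtain ⟨s, hs⟩ := exists_lieHom_lift_of_disjoint_ker (stabProj k G j₀)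
    (hcenter.mono_left ker_stabProj_le_center) (kk_le_range_stabProj hinv)
  exact ⟨(LieSubalgebra.inclusion stabzz_le_zz).comp s, hs, fun ξ =>
    ⟨zz_le_hamiltonianVF (stabzz_le_zz (s ξ).2),
      SmoothBilin.isKilling_of_mem_invariantVF (stabzz_le_invariantVF (s ξ).2)⟩⟩

end HamAction

end

open HamAction
theorem lift_of_stabilizer_lie_algebra {m k : ℕ}
    {M : Type*} [TopologicalSpace M] [ChartedSpace (EuclideanSpace ℝ (Fin m)) M]
    [IsManifold (𝓡 m) ∞ M] [T2Space M] [CompactSpace M] [ConnectedSpace M]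
    [MeasurableSpace M] [BorelSpace M]
    {G : Type*} [TopologicalSpace G] [ChartedSpace (EuclideanSpace ℝ (Fin k)) G] [Group G]
    [LieGroup (𝓡 k) ∞ G] [T2Space G] [CompactSpace G] [ConnectedSpace G]
    [MulAction G M] [ContMDiffSMul (𝓡 k) (𝓡 m) ∞ G M]
    (Ω : SymplecticForm m M) (hG : IsHamiltonianAction G k Ω)
    (j₀ : CompatibleACS Ω) (hinv : j₀.Invariant G) (hint : j₀.Integrable)
    (hext : IsReducedScalarCurvature G k j₀ 0) :
    ∃ lift : kk G k j₀ →ₗ⁅ℝ⁆ zz G Ω,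
      (∀ ξ : kk G k j₀, proj G k Ω (lift ξ) = ξ) ∧
      ∀ ξ : kk G k j₀, IsHamiltonianVF Ω (lift ξ : VF m M) ∧
        IsKilling j₀.metric (lift ξ : VF m M) := by
  exact lift_of_stabilizer_lie_algebra_general Ω j₀ hinv
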